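/- For every Dyck path λ of order n, the generating function of cover-inclusive Dyck tilings with lower path λ by the discrepancy statistic equals the generating function of the linear extensions of the chord poset of λ by the descent statistic: Σ_{T ∈ D(λ,*)} z^{dis(T)} = Σ_{σ ∈ L(P_λ)} z^{des(σ)}, as polynomials in z. -/

import Mathlib

open Finset

noncomputable section

/-- A Dyck path of order `n`: a word of `2n` steps (`true` = up-step `(+1,+1)`,
`false` = down-step `(+1,-1)`) from `(-n,0)` to `(n,0)` staying weakly above the x-axis. -/
structure DyckPath (n : ℕ) where
  step : Fin (2 * n) → Bool
  balanced : (Finset.univ.filter fun i => step i = true).card = n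
  nonneg : ∀ k : ℕ, k ≤ 2 * n →
    (Finset.univ.filter fun i : Fin (2 * n) => (i : ℕ) < k ∧ step i = false).card ≤
      (Finset.univ.filter fun i : Fin (2 * n) => (i : ℕ) < k ∧ step i = true).card

namespace DyckPath

/-- Height of the path above column `x` (columns run from `-n` to `n`). -/
def ht {n : ℕ} (P : DyckPath n) (x : ℤ) : ℤ :=
  ((Finset.univ.filter fun i : Fin (2 * n) => ((i : ℕ) : ℤ) < x + n ∧ P.step i = true).card : ℤ) -
    ((Finset.univ.filter fun i : Fin (2 * n) => ((i : ℕ) : ℤ) < x + n ∧ P.step i = false).card : ℤ)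

/-- Height of the path at lattice point number `k`, `0 ≤ k ≤ 2n`
(point `k` lies at column `k - n`). -/
def pt {n : ℕ} (P : DyckPath n) (k : ℕ) : ℤ := P.ht ((k : ℤ) - n)

end DyckPath

/-- `IsChord P p q`: the up-step at (0-indexed) position `p` matches the down-step at
position `q`, forming a chord of `P`. -/
def IsChord {n : ℕ} (P : DyckPath n) (p q : ℕ) : Prop :=
  p < q ∧ q < 2 * n ∧
    (∃ hp : p < 2 * n, P.step ⟨p, hp⟩ = true) ∧
    (∃ hq : q < 2 * n, P.step ⟨q, hq⟩ = false) ∧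
    P.pt (q + 1) = P.pt p ∧
    ∀ m : ℕ, p < m → m ≤ q → P.pt p < P.pt m

/-- A natural labeling of the chord poset of `P`: the chord labeled `i` has its up-step at
(0-indexed) position `l i` and matching down-step at position `r i`; distinct labels name
distinct chords; and if one chord is nested inside another it receives a larger label. -/
structure ChordLabeling {n : ℕ} (P : DyckPath n) where
  l : Fin n → ℕ
  r : Fin n → ℕ
  chord : ∀ i, IsChord P (l i) (r i)
  inj : Function.Injective l
  natural : ∀ i j : Fin n, l j < l i → r i < r j → j < i

/-- The length of the chord labeled `i`: the number of up steps of `P` between and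
including its two endpoints. -/
def chordLen {n : ℕ} {P : DyckPath n} (C : ChordLabeling P) (i : Fin n) : ℕ :=
  (Finset.univ.filter fun m : Fin (2 * n) =>
    C.l i ≤ (m : ℕ) ∧ (m : ℕ) ≤ C.r i ∧ P.step m = true).card

/-- The growth sequence `p_1, …, p_n` associated with a natural chord labeling:
`p i = #{j<i : l j < l i} + #{j<i : r j < l i}`. -/
def seqOf {n : ℕ} {P : DyckPath n} (C : ChordLabeling P) (i : Fin n) : ℕ :=
  (Finset.univ.filter fun j : Fin n => j < i ∧ C.l j < C.l i).card +
    (Finset.univ.filter fun j : Fin n => j < i ∧ C.r j < C.l i).card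

/-- `σ` is the standardization of the word `w` (with distinct letters). -/
def IsStandardization {n : ℕ} (w : Fin n → ℕ) (σ : Equiv.Perm (Fin n)) : Prop :=
  ∀ i j : Fin n, σ i < σ j ↔ w i < w j

/-- `σ ∈ 𝓛(P_λ)`: σ is `L₀ ∘ L⁻¹` for some natural labeling `L` of the chord poset,
equivalently the standardization of the word of left endpoints of a natural labeling. -/
def LinExt {n : ℕ} (P : DyckPath n) (σ : Equiv.Perm (Fin n)) : Prop :=
  ∃ C : ChordLabeling P, IsStandardization C.l σ

/-- Successor index in `Fin n` (used only under the guard `i+1 < n`). -/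
def nextIdx {n : ℕ} (i : Fin n) : Fin n := ⟨((i : ℕ) + 1) % n, Nat.mod_lt _ i.pos⟩

/-- Descent set of a word: positions `i` with `i+1 < n` and `w i > w (i+1)`. -/
def descentFinset {n : ℕ} (w : Fin n → ℕ) : Finset (Fin n) :=
  Finset.univ.filter fun i => (i : ℕ) + 1 < n ∧ w (nextIdx i) < w i

/-- Number of inversions of a word. -/
def wordInv {n : ℕ} (w : Fin n → ℕ) : ℕ :=
  (Finset.univ.filter fun p : Fin n × Fin n => p.1 < p.2 ∧ w p.2 < w p.1).card

/-- The word of values of a permutation. -/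
def permWord {n : ℕ} (σ : Equiv.Perm (Fin n)) : Fin n → ℕ := fun i => (σ i : ℕ)

/-- inv(σ). -/
def permInv {n : ℕ} (σ : Equiv.Perm (Fin n)) : ℕ := wordInv (permWord σ)

/-- des(σ). -/
def permDes {n : ℕ} (σ : Equiv.Perm (Fin n)) : ℕ := (descentFinset (permWord σ)).card

/-- `REM_i(w) = {k > i : w i > w k > w (i+1)}`, the right embraced numbers. -/
def remSet {n : ℕ} (w : Fin n → ℕ) (i : Fin n) : Finset (Fin n) :=
  Finset.univ.filter fun k => i < k ∧ w (nextIdx i) < w k ∧ w k < w i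

/-- desdif(σ) = Σ_{i ∈ DES σ} (σ i − σ (i+1)). -/
def desdif {n : ℕ} (σ : Equiv.Perm (Fin n)) : ℕ :=
  ∑ i ∈ descentFinset (permWord σ), (permWord σ i - permWord σ (nextIdx i))

/-- res(σ) = Σ_{i ∈ DES σ} #{k < i : σ i > σ k > σ (i+1)}. -/
def resStat {n : ℕ} (σ : Equiv.Perm (Fin n)) : ℕ :=
  ∑ i ∈ descentFinset (permWord σ),
    (Finset.univ.filter fun k : Fin n =>
      k < i ∧ permWord σ (nextIdx i) < permWord σ k ∧ permWord σ k < permWord σ i).card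

/-- The Mahonian statistic mad(σ) = desdif(σ) + res(σ). -/
def mad {n : ℕ} (σ : Equiv.Perm (Fin n)) : ℕ := desdif σ + resStat σ

/-- σ avoids the pattern 231. -/
def Avoids231 {n : ℕ} (σ : Equiv.Perm (Fin n)) : Prop :=
  ¬∃ i j k : Fin n, i < j ∧ j < k ∧ σ k < σ i ∧ σ i < σ j

/-- The boxes of the skew shape `lam/mu` (with `mu` weakly above `lam`), each box
recorded by its bottom corner (a lattice point `(x, z)` with `z ≡ x + n (mod 2)`). -/
def skewCells {n : ℕ} (lam mu : DyckPath n) : Finset (ℤ × ℤ) :=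
  ((Finset.Icc (-(n : ℤ)) n) ×ˢ (Finset.Icc (0 : ℤ) n)).filter fun c =>
    lam.ht c.1 ≤ c.2 ∧ c.2 + 2 ≤ mu.ht c.1 ∧ (c.2 - c.1 - n) % 2 = 0

/-- A Dyck tile, recorded by the set of bottom corners of its boxes: these form
a Dyck-path shape, i.e. a ±1-step lattice path whose two ends are lowest. -/
def IsDyckTile (t : Finset (ℤ × ℤ)) : Prop :=
  ∃ (a b : ℤ) (f : ℤ → ℤ), a ≤ b ∧
    (∀ x : ℤ, a ≤ x → x < b → f (x + 1) = f x + 1 ∨ f (x + 1) = f x - 1) ∧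
    f b = f a ∧ (∀ x : ℤ, a ≤ x → x ≤ b → f a ≤ f x) ∧
    t = (Finset.Icc a b).image fun x => (x, f x)

/-- A Dyck tiling of order `n`: a tiling of the skew shape between two Dyck paths of
order `n` by Dyck tiles. -/
structure DyckTiling (n : ℕ) where
  lower : DyckPath n
  upper : DyckPath n
  below : ∀ x : ℤ, lower.ht x ≤ upper.ht x
  tiles : Finset (Finset (ℤ × ℤ))
  isDyck : ∀ t ∈ tiles, IsDyckTile t
  disj : ∀ t ∈ tiles, ∀ u ∈ tiles, t ≠ u → Disjoint t u
  cover : tiles.biUnion id = skewCells lower upper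

namespace DyckTiling

/-- Number of boxes of the skew shape. -/
def area {n : ℕ} (T : DyckTiling n) : ℕ := (skewCells T.lower T.upper).card

/-- Number of tiles. -/
def numTiles {n : ℕ} (T : DyckTiling n) : ℕ := T.tiles.card

/-- art(T) = (area(T) + tiles(T)) / 2. -/
def art {n : ℕ} (T : DyckTiling n) : ℕ := (T.area + T.numTiles) / 2

/-- dis(T): the number of step positions where the lower path steps down while the
upper path steps up. -/
def dis {n : ℕ} (T : DyckTiling n) : ℕ :=
  (Finset.univ.filter fun i : Fin (2 * n) =>
    T.lower.step i = false ∧ T.upper.step i = true).card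

/-- Cover-inclusiveness: whenever a tile has a box strictly above a box of another tile,
its horizontal extent is contained in that of the other tile. -/
def CoverInclusive {n : ℕ} (T : DyckTiling n) : Prop :=
  ∀ t ∈ T.tiles, ∀ u ∈ T.tiles,
    (∃ p ∈ t, ∃ q ∈ u, (p : ℤ × ℤ).1 = (q : ℤ × ℤ).1 ∧ (q : ℤ × ℤ).2 < (p : ℤ × ℤ).2) →
    ∀ p ∈ t, ∃ y : ℤ, ((p : ℤ × ℤ).1, y) ∈ u

end DyckTiling

/-- Height function of the spread at column `s` of a Dyck path. -/
def spreadHt {n : ℕ} (P : DyckPath n) (s x : ℤ) : ℤ :=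
  if x < s then P.ht (x + 1) else if x = s then P.ht s + 1 else P.ht (x - 1)

/-- Spread of a tile at column `s`: points left of `s` move left, points right of `s`
move right, and a point at column `s` is duplicated upward. -/
def spreadTile (s : ℤ) (t : Finset (ℤ × ℤ)) : Finset (ℤ × ℤ) :=
  ((t.filter fun p => p.1 ≤ s).image fun p => (p.1 - 1, p.2)) ∪
    ((t.filter fun p => p.1 = s).image fun p => (p.1, p.2 + 1)) ∪
    ((t.filter fun p => s ≤ p.1).image fun p => (p.1 + 1, p.2))

/-- Spread of a set of tiles at column `s`. -/
def spreadTiles (s : ℤ) (ts : Finset (Finset (ℤ × ℤ))) : Finset (Finset (ℤ × ℤ)) :=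
  ts.image (spreadTile s)

/-- Column `c` is eligible for a tiling with upper-boundary height function `h` and
tile set `ts`: the upper boundary has an up step ending at column `c`, and its point at
column `c` is not the top corner of a one-box tile. -/
def EligibleCol (h : ℤ → ℤ) (ts : Finset (Finset (ℤ × ℤ))) (c : ℤ) : Prop :=
  h c = h (c - 1) + 1 ∧ ({(c, h c - 2)} : Finset (ℤ × ℤ)) ∉ ts

/-- `T'` is the result of the strip-grow map applied to `(T, s)`: spread `T` at `s` and
add a one-box tile on each up step of the (spread) upper boundary starting at a column
`≥ s` (i.e. strictly to the right of column `s`). -/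
def StripGrowRel {n : ℕ} (T : DyckTiling n) (s : ℤ) (T' : DyckTiling (n + 1)) : Prop :=
  (∀ x : ℤ, T'.lower.ht x = spreadHt T.lower s x) ∧
  (∀ x : ℤ, T'.upper.ht x =
    if s ≤ x ∧ spreadHt T.upper s (x + 1) = spreadHt T.upper s x + 1 then
      spreadHt T.upper s x + 2
    else spreadHt T.upper s x) ∧
  T'.tiles = spreadTiles s T.tiles ∪
    ((Finset.Icc s (n : ℤ)).filter fun x =>
        spreadHt T.upper s (x + 1) = spreadHt T.upper s x + 1).image
      (fun x => ({(x, spreadHt T.upper s x)} : Finset (ℤ × ℤ)))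

/-- `T'` is the result of the ribbon-grow map applied to `(T, s)`: spread `T` at `s`,
and if the special column `Q` of the spread tiling is strictly right of `s`, add a
ribbon of one-box tiles at all columns strictly between `s` and `Q`. -/
def RibbonGrowRel {n : ℕ} (T : DyckTiling n) (s : ℤ) (T' : DyckTiling (n + 1)) : Prop :=
  (∀ x : ℤ, T'.lower.ht x = spreadHt T.lower s x) ∧
  ∃ Q : ℤ,
    EligibleCol (spreadHt T.upper s) (spreadTiles s T.tiles) Q ∧
    (∀ c : ℤ, EligibleCol (spreadHt T.upper s) (spreadTiles s T.tiles) c → c ≤ Q) ∧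
    (∀ x : ℤ, T'.upper.ht x =
      if s < x ∧ x < Q then spreadHt T.upper s x + 2 else spreadHt T.upper s x) ∧
    T'.tiles = spreadTiles s T.tiles ∪
      (Finset.Ioo s Q).image (fun x => ({(x, spreadHt T.upper s x)} : Finset (ℤ × ℤ)))

/-- `s` is the special column of `T`: its rightmost eligible column. -/
def SpecialCol {n : ℕ} (T : DyckTiling n) (s : ℤ) : Prop :=
  EligibleCol T.upper.ht T.tiles s ∧ ∀ c : ℤ, EligibleCol T.upper.ht T.tiles c → c ≤ s

/-- In the strip-shrink map applied to `T'` with special column `s`, a one-box tile is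
removed at column `x`: `x` is right of `s` and there is a one-box tile there that is
part of an up step of the upper boundary. -/
def StripRemovedAt {n : ℕ} (T' : DyckTiling n) (s x : ℤ) : Prop :=
  s < x ∧ T'.upper.ht x = T'.upper.ht (x - 1) + 1 ∧
    ({(x, T'.upper.ht x - 2)} : Finset (ℤ × ℤ)) ∈ T'.tiles

instance {n : ℕ} (T' : DyckTiling n) (s x : ℤ) : Decidable (StripRemovedAt T' s x) := by
  unfold StripRemovedAt; infer_instance

/-- `(T, s)` is the result of the strip-shrink map applied to `T'`: `s` is the special
column of `T'`; all one-box tiles right of `s` lying on up steps of the upper boundary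
are removed; and the result is the spread of `T` at `s`. -/
def StripShrinkRel {n : ℕ} (T' : DyckTiling (n + 1)) (T : DyckTiling n) (s : ℤ) : Prop :=
  SpecialCol T' s ∧
  (∀ x : ℤ, spreadHt T.lower s x = T'.lower.ht x) ∧
  (∀ x : ℤ, spreadHt T.upper s x =
    if StripRemovedAt T' s x then T'.upper.ht x - 2 else T'.upper.ht x) ∧
  spreadTiles s T.tiles =
    T'.tiles \ (((Finset.Ioc s ((n : ℤ) + 1)).filter fun x => StripRemovedAt T' s x).image
      fun x => ({(x, T'.upper.ht x - 2)} : Finset (ℤ × ℤ)))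

/-- `(T, s)` is the result of the ribbon-shrink map applied to `T'`: `s` is the special
column of `T'`; the maximal run of topmost one-box tiles in columns `s+1, s+2, …` is
removed; and the result is the spread of `T` at `s`. -/
def RibbonShrinkRel {n : ℕ} (T' : DyckTiling (n + 1)) (T : DyckTiling n) (s : ℤ) : Prop :=
  SpecialCol T' s ∧
  ∃ r : ℤ, s < r ∧
    (∀ x : ℤ, s < x → x < r → ({(x, T'.upper.ht x - 2)} : Finset (ℤ × ℤ)) ∈ T'.tiles) ∧
    ({(r, T'.upper.ht r - 2)} : Finset (ℤ × ℤ)) ∉ T'.tiles ∧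
    (∀ x : ℤ, spreadHt T.lower s x = T'.lower.ht x) ∧
    (∀ x : ℤ, spreadHt T.upper s x =
      if s < x ∧ x < r then T'.upper.ht x - 2 else T'.upper.ht x) ∧
    spreadTiles s T.tiles =
      T'.tiles \ ((Finset.Ioo s r).image fun x => ({(x, T'.upper.ht x - 2)} : Finset (ℤ × ℤ)))

/-- `IsDTS n p T`: `T` is the Dyck tiling `DTS(p_1, …, p_n)` (indices 0-based, so the
growth column for step `i` is `p i - i`). -/
inductive IsDTS : (n : ℕ) → (Fin n → ℕ) → DyckTiling n → Prop where
  | nil (p : Fin 0 → ℕ) (T : DyckTiling 0) : IsDTS 0 p T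
  | cons (n : ℕ) (p : Fin (n + 1) → ℕ) (T : DyckTiling n) (T' : DyckTiling (n + 1)) :
      IsDTS n (fun i => p i.castSucc) T →
      StripGrowRel T ((p (Fin.last n) : ℤ) - n) T' → IsDTS (n + 1) p T'

/-- `IsDTR n p T`: `T` is the Dyck tiling `DTR(p_1, …, p_n)`. -/
inductive IsDTR : (n : ℕ) → (Fin n → ℕ) → DyckTiling n → Prop where
  | nil (p : Fin 0 → ℕ) (T : DyckTiling 0) : IsDTR 0 p T
  | cons (n : ℕ) (p : Fin (n + 1) → ℕ) (T : DyckTiling n) (T' : DyckTiling (n + 1)) :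
      IsDTR n (fun i => p i.castSucc) T →
      RibbonGrowRel T ((p (Fin.last n) : ℤ) - n) T' → IsDTR (n + 1) p T'

/-- `T = DTS(λ, σ)`. -/
def IsDTSof {n : ℕ} (lam : DyckPath n) (σ : Equiv.Perm (Fin n)) (T : DyckTiling n) : Prop :=
  ∃ C : ChordLabeling lam, IsStandardization C.l σ ∧ IsDTS n (seqOf C) T

/-- `T = DTR(λ, σ)`. -/
def IsDTRof {n : ℕ} (lam : DyckPath n) (σ : Equiv.Perm (Fin n)) (T : DyckTiling n) : Prop :=
  ∃ C : ChordLabeling lam, IsStandardization C.l σ ∧ IsDTR n (seqOf C) T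

/-- Increment `a` if it exceeds `p`. -/
def bump (p a : ℕ) : ℕ := if p < a then a + 1 else a

/-- The perfect matching `match(p_1, …, p_n)` of `{1, …, 2n}`. -/
def matchSeq : (n : ℕ) → (Fin n → ℕ) → Finset (ℕ × ℕ)
  | 0, _ => ∅
  | n + 1, p =>
    ((matchSeq n fun i => p i.castSucc).image fun q =>
      (bump (p (Fin.last n)) q.1, bump (p (Fin.last n)) q.2)) ∪
      {(p (Fin.last n) + 1, 2 * (n + 1))}

/-- The number of nestings of a matching: pairs `(a,b)`, `(c,d)` with `c < a < b < d`. -/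
def nestings (M : Finset (ℕ × ℕ)) : ℕ :=
  ((M ×ˢ M).filter fun q => q.2.1 < q.1.1 ∧ q.1.1 < q.1.2 ∧ q.1.2 < q.2.2).card

/-- `w` is the min-word of `M`: the list of the smaller elements of the pairs of `M`,
sorted by the larger elements. -/
def IsMinWord (n : ℕ) (M : Finset (ℕ × ℕ)) (w : Fin n → ℕ) : Prop :=
  ∃ b : Fin n → ℕ, StrictMono b ∧ (∀ i, w i < b i) ∧
    M = Finset.univ.image fun i => (w i, b i)

/-- The number of tiles of `T` containing boxes over both endpoint columns of the
chord with endpoints at step positions `p < q`. -/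
def chordTileCount {n : ℕ} (T : DyckTiling n) (p q : ℕ) : ℕ :=
  (T.tiles.filter fun t =>
    (∃ c ∈ t, (c : ℤ × ℤ).1 = (p : ℤ) + 1 - n) ∧ (∃ c ∈ t, (c : ℤ × ℤ).1 = (q : ℤ) - n)).card

/-- A Dyck tableau of order `n` over the zigzag path `Z` of order `n+1`: a skew shape
`Z/μ` with `n` dots, one in each column of the skew shape through a valley of `Z`. -/
structure DyckTableau (n : ℕ) (Z : DyckPath (n + 1)) where
  upper : DyckPath (n + 1)
  below : ∀ x : ℤ, Z.ht x ≤ upper.ht x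
  dots : Finset (ℤ × ℤ)
  sub : dots ⊆ skewCells Z upper
  card_dots : dots.card = n
  valley : ∀ x : ℤ, Z.ht (x - 1) = Z.ht x + 1 → Z.ht (x + 1) = Z.ht x + 1 →
    (dots.filter fun c => c.1 = x).card = 1

/-- The `q`-integer `[m]_q = 1 + q + ⋯ + q^(m-1)` as a polynomial. -/
def qint (m : ℕ) : Polynomial ℤ := ∑ i ∈ Finset.range m, Polynomial.X ^ i

/-- The `q`-factorial `[n]_q!`. -/
def qfact (n : ℕ) : Polynomial ℤ := ∏ i ∈ Finset.range n, qint (i + 1)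


/-- Plane forests: `node a r` is a tree whose root has the forest `a` of subtrees, followed by
the forest `r`. -/
inductive PlaneForest where
  | nil : PlaneForest
  | node : PlaneForest → PlaneForest → PlaneForest

namespace PlaneForest

/-- Number of vertices. -/
def size : PlaneForest → ℕ
  | nil => 0
  | node a r => a.size + 1 + r.size

/-- Number of order-preserving maps from the forest to `{0, …, m}`. -/
def orderPoly : PlaneForest → ℕ → ℕ
  | nil, _ => 1
  | node a r, m => (∑ k ∈ range (m + 1), a.orderPoly k) * r.orderPoly m

variable {R : Type*} [CommRing R]

/-- The transfer operator of a forest: it sums `z ^ wt * φ (end)` over all configurations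
that start at a given height. -/
def transfer (z : R) : PlaneForest → (ℕ → R) → ℕ → R
  | nil, φ, i => φ i
  | node a r, φ, i =>
    let ψ : ℕ → R := fun j => transfer z r φ j + transfer z r φ (j + 1)
    let χ : ℕ → R := fun j => ∑ k ∈ range (j + 1), transfer z a (fun x => ψ (x + k)) (j - k)
    χ i + (if i = 0 then 0 else z * χ (i - 1))

theorem transfer_add (z : R) (t : PlaneForest) (φ ψ : ℕ → R) :
    transfer z t (fun j => φ j + ψ j) = fun i => transfer z t φ i + transfer z t ψ i := by
  induction t generalizing φ ψ with
  | nil => rfl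
  | node a r iha ihr =>
    funext i
    have key : ∀ k : ℕ, transfer z a (fun x => transfer z r (fun j => φ j + ψ j) (x + k) +
        transfer z r (fun j => φ j + ψ j) (x + k + 1)) = fun i =>
        transfer z a (fun x => transfer z r φ (x + k) + transfer z r φ (x + k + 1)) i +
        transfer z a (fun x => transfer z r ψ (x + k) + transfer z r ψ (x + k + 1)) i := by
      intro k
      rw [← iha]
      congr 1
      funext x
      rw [ihr]
      ring
    simp only [transfer, key, Finset.sum_add_distrib]
    split_ifs <;> ring

theorem transfer_smul (z : R) (t : PlaneForest) (w : R) (φ : ℕ → R) :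
    transfer z t (fun j => w * φ j) = fun i => w * transfer z t φ i := by
  induction t generalizing φ with
  | nil => rfl
  | node a r iha ihr =>
    funext i
    have key : ∀ k : ℕ, transfer z a (fun x => transfer z r (fun j => w * φ j) (x + k) +
        transfer z r (fun j => w * φ j) (x + k + 1)) = fun i =>
        w * transfer z a (fun x => transfer z r φ (x + k) + transfer z r φ (x + k + 1)) i := by
      intro k
      rw [← iha]
      congr 1
      funext x
      rw [ihr]
      ring
    simp only [transfer, key, ← Finset.mul_sum]
    split_ifs <;> ring

theorem transfer_sum (z : R) (t : PlaneForest) {ι : Type*} (s : Finset ι) (φ : ι → ℕ → R) :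
    transfer z t (fun j => ∑ k ∈ s, φ k j) = fun i => ∑ k ∈ s, transfer z t (φ k) i := by
  classical
  induction s using Finset.induction_on with
  | empty =>
    have := transfer_smul z t 0 (fun _ => 0)
    simpa using this
  | insert a s ha ih =>
    simp only [Finset.sum_insert ha]
    rw [transfer_add, ih]

/-- The common eigenfunctions of the transfer operators: the coefficients of
`(1 + t) ^ m / (1 + z t) ^ (m + 1)`. -/
def eigen (z : R) : ℕ → ℕ → R
  | _, 0 => 1
  | 0, i + 1 => -z * eigen z 0 i
  | m + 1, i + 1 => eigen z m (i + 1) + eigen z m i - z * eigen z (m + 1) i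

theorem eigen_zero_right (z : R) (m : ℕ) : eigen z m 0 = 1 := by cases m <;> rw [eigen]

theorem eigen_zero_succ (z : R) (i : ℕ) : eigen z 0 (i + 1) = -z * eigen z 0 i := by rw [eigen]

theorem eigen_succ_succ (z : R) (m i : ℕ) :
    eigen z (m + 1) (i + 1) = eigen z m (i + 1) + eigen z m i - z * eigen z (m + 1) i := by
  rw [eigen]

theorem eigen_add_eigen_succ (z : R) (m i : ℕ) :
    eigen z m i + eigen z m (i + 1) = (1 - z) * ∑ k ∈ range (m + 1), eigen z k i := by
  induction m with
  | zero => simp [eigen_zero_succ]; ring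
  | succ m ih => rw [Finset.sum_range_succ, mul_add, ← ih, eigen_succ_succ]; ring

/-- The sum over all floors of the shifted transfer operators of a forest. -/
def floorSum (z : R) (a : PlaneForest) (ψ : ℕ → R) (j : ℕ) : R :=
  ∑ k ∈ range (j + 1), transfer z a (fun x => ψ (x + k)) (j - k)

theorem floorSum_zero (z : R) (a : PlaneForest) (ψ : ℕ → R) :
    floorSum z a ψ 0 = transfer z a ψ 0 := by simp [floorSum]

theorem floorSum_succ (z : R) (a : PlaneForest) (ψ : ℕ → R) (j : ℕ) :
    floorSum z a ψ (j + 1) =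
      transfer z a ψ (j + 1) + floorSum z a (fun x => ψ (x + 1)) j := by
  rw [floorSum, Finset.sum_range_succ']
  simp only [floorSum, Nat.add_sub_add_right]
  rw [add_comm]
  congr 1

theorem transfer_node (z : R) (a r : PlaneForest) (φ : ℕ → R) (i : ℕ) :
    transfer z (node a r) φ i =
      floorSum z a (fun j => transfer z r φ j + transfer z r φ (j + 1)) i +
        (if i = 0 then 0 else
          z * floorSum z a (fun j => transfer z r φ j + transfer z r φ (j + 1)) (i - 1)) := by
  simp only [transfer, floorSum]

theorem floorSum_smul (z : R) (a : PlaneForest) (w : R) (ψ : ℕ → R) (j : ℕ) :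
    floorSum z a (fun x => w * ψ x) j = w * floorSum z a ψ j := by
  simp only [floorSum, Finset.mul_sum]
  refine Finset.sum_congr rfl fun k _ => ?_
  rw [transfer_smul z a w (fun x => ψ (x + k))]

theorem floorSum_add (z : R) (a : PlaneForest) (φ ψ : ℕ → R) (j : ℕ) :
    floorSum z a (fun x => φ x + ψ x) j = floorSum z a φ j + floorSum z a ψ j := by
  simp only [floorSum, ← Finset.sum_add_distrib]
  refine Finset.sum_congr rfl fun k _ => ?_
  rw [transfer_add z a (fun x => φ (x + k))]

theorem floorSum_eigen (z : R) (a : PlaneForest) (w : ℕ → R)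
    (hw : ∀ m, transfer z a (eigen z m) = fun i => w m * eigen z m i) (m i : ℕ) :
    floorSum z a (fun j => eigen z m j + eigen z m (j + 1)) i +
      (if i = 0 then 0 else z * floorSum z a (fun j => eigen z m j + eigen z m (j + 1)) (i - 1)) =
    (1 - z) * (∑ k ∈ range (m + 1), w k) * eigen z m i := by
  have hsucc : ∀ m i, floorSum z a (eigen z m) (i + 1) = w m * eigen z m (i + 1) +
      (floorSum z a (fun j => eigen z m j + eigen z m (j + 1)) i - floorSum z a (eigen z m) i) := by
    intro m i
    rw [floorSum_succ, hw, floorSum_add z a (eigen z m) (fun j => eigen z m (j + 1))]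
    ring
  have hzero : ∀ m, floorSum z a (eigen z m) 0 = w m := by
    intro m
    simp only [floorSum_zero, hw, eigen_zero_right, mul_one]
  induction m generalizing i with
  | zero =>
    have h : ∀ i, floorSum z a (fun j => eigen z 0 j + eigen z 0 (j + 1)) i =
        (1 - z) * floorSum z a (eigen z 0) i := by
      intro i
      rw [← floorSum_smul]
      congr 1
      funext j
      rw [eigen_add_eigen_succ]
      simp
    cases i with
    | zero => simp [h, hzero, eigen_zero_right]
    | succ i => simp [h, hsucc]; ring
  | succ m ih =>
    have h : ∀ i, floorSum z a (fun j => eigen z (m + 1) j + eigen z (m + 1) (j + 1)) i =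
        floorSum z a (fun j => eigen z m j + eigen z m (j + 1)) i +
        (1 - z) * floorSum z a (eigen z (m + 1)) i := by
      intro i
      rw [← floorSum_smul, ← floorSum_add]
      congr 1
      funext j
      rw [eigen_add_eigen_succ, eigen_add_eigen_succ, Finset.sum_range_succ _ (m + 1)]
      ring
    have hnext : ∀ i, floorSum z a (fun j => eigen z m j + eigen z m (j + 1)) (i + 1) +
        floorSum z a (fun j => eigen z m j + eigen z m (j + 1)) i =
        (1 - z) * (∑ k ∈ range (m + 1), w k) * eigen z (m + 1) (i + 1) := by
      intro i
      induction i with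
      | zero =>
        have h0 := ih 0
        have h1 := ih 1
        simp only [eigen_zero_right, eigen_succ_succ, if_true, one_ne_zero, if_false,
          Nat.sub_self, zero_add] at h0 h1 ⊢
        linear_combination h1 + (1 - z) * h0
      | succ i ihi =>
        have h0 := ih (i + 1)
        have h1 := ih (i + 2)
        simp only [Nat.add_eq_zero_iff, OfNat.ofNat_ne_zero, one_ne_zero, and_false, if_false,
          Nat.add_sub_cancel, show i + 2 - 1 = i + 1 from rfl] at h0 h1
        rw [eigen_succ_succ]
        linear_combination h1 + h0 - z * ihi
    rw [Finset.sum_range_succ _ (m + 1)]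
    cases i with
    | zero =>
      have h0 := ih 0
      simp only [eigen_zero_right, if_true, h, hzero] at h0 ⊢
      linear_combination h0
    | succ i =>
      have h1 := hnext i
      simp only [Nat.add_eq_zero_iff, one_ne_zero, and_false, if_false, Nat.add_sub_cancel]
      have h2 := h i
      rw [h (i + 1), hsucc (m + 1) i]
      linear_combination h1 + h2

theorem transfer_eigen (z : R) (t : PlaneForest) (m : ℕ) :
    transfer z t (eigen z m) =
      fun i => ((1 - z) ^ t.size * (t.orderPoly m : R)) * eigen z m i := by
  induction t generalizing m with
  | nil => simp [transfer, size, orderPoly]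
  | node a r iha ihr =>
    funext i
    have key : ∀ j, floorSum z a (fun j => transfer z r (eigen z m) j +
        transfer z r (eigen z m) (j + 1)) j = ((1 - z) ^ r.size * (r.orderPoly m : R)) *
          floorSum z a (fun j => eigen z m j + eigen z m (j + 1)) j := by
      intro j
      rw [← floorSum_smul, ihr]
      congr 1
      funext x
      ring
    have h := floorSum_eigen z a _ iha m i
    have e : transfer z (node a r) (eigen z m) i =
      ((1 - z) ^ r.size * (r.orderPoly m : R)) *
      (floorSum z a (fun j => eigen z m j + eigen z m (j + 1)) i +
      (if i = 0 then 0 else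
        z * floorSum z a (fun j => eigen z m j + eigen z m (j + 1)) (i - 1))) := by
      rw [mul_add, ← key, transfer_node, key (i - 1)]
      split_ifs
      · simp
      · ring
    rw [e, h, size, orderPoly, ← Finset.mul_sum]
    push_cast
    ring

theorem one_sub_mul_sum_eigen (z : R) (M i : ℕ) :
    (1 - z) * ∑ m ∈ range M, z ^ m * eigen z m i +
      z ^ M * (eigen z M i + if i = 0 then 0 else z * eigen z M (i - 1)) =
      if i = 0 then 1 else 0 := by
  induction M with
  | zero =>
    cases i with
    | zero => simp [eigen_zero_right]
    | succ i => simp [eigen_zero_succ]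
  | succ M ih =>
    rw [← ih, Finset.sum_range_succ]
    cases i with
    | zero => simp [eigen_zero_right]; ring
    | succ i => simp [eigen_succ_succ]; ring

theorem transfer_delta (z : R) (t : PlaneForest) (M : ℕ) :
    ∃ y : R, transfer z t (fun i => if i = 0 then 1 else 0) 0 =
      (1 - z) ^ (t.size + 1) * ∑ m ∈ range M, z ^ m * (t.orderPoly m : R) + z ^ M * y := by
  refine ⟨transfer z t (fun i => eigen z M i + if i = 0 then 0 else z * eigen z M (i - 1)) 0, ?_⟩
  rw [← funext (one_sub_mul_sum_eigen z M)]
  rw [transfer_add z t (fun i => (1 - z) * ∑ m ∈ range M, z ^ m * eigen z m i)]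
  rw [transfer_smul z t (1 - z), transfer_smul z t (z ^ M)]
  rw [transfer_sum]
  simp only [transfer_smul, transfer_eigen, eigen_zero_right]
  congr 1
  simp only [Finset.mul_sum]
  refine Finset.sum_congr rfl fun k _ => ?_
  ring

end PlaneForest

/-- Sequences `g` of length `n` with `lo + e 0 ≤ g 0`, `g i + e (i + 1) ≤ g (i + 1)` and all
values at most `m`. -/
def gapSeqs : (n : ℕ) → (Fin n → ℕ) → ℕ → ℕ → Finset (Fin n → ℕ)
  | 0, _, _, _ => {Fin.elim0}
  | n + 1, e, lo, m =>
    (Icc (lo + e 0) m).biUnion fun v => (gapSeqs n (Fin.tail e) v m).image (Fin.cons v)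

theorem mem_gapSeqs_succ {n : ℕ} (e : Fin (n + 1) → ℕ) (lo m : ℕ) (g : Fin (n + 1) → ℕ) :
    g ∈ gapSeqs (n + 1) e lo m ↔
      (lo + e 0 ≤ g 0 ∧ g 0 ≤ m) ∧ Fin.tail g ∈ gapSeqs n (Fin.tail e) (g 0) m := by
  simp only [gapSeqs, mem_biUnion, mem_image, mem_Icc]
  constructor
  · rintro ⟨v, hv, g', hg', rfl⟩
    simpa using ⟨hv, hg'⟩
  · rintro ⟨hv, hg⟩
    exact ⟨g 0, hv, _, hg, Fin.cons_self_tail g⟩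

theorem mem_gapSeqs {n : ℕ} (e : Fin (n + 1) → ℕ) (lo m : ℕ) (g : Fin (n + 1) → ℕ) :
    g ∈ gapSeqs (n + 1) e lo m ↔
      lo + e 0 ≤ g 0 ∧ (∀ i : Fin n, g i.castSucc + e i.succ ≤ g i.succ) ∧ g (Fin.last n) ≤ m := by
  induction n generalizing lo with
  | zero =>
    rw [mem_gapSeqs_succ]
    simp [gapSeqs]
    intro _ _
    exact Subsingleton.elim _ _
  | succ n ih =>
    rw [mem_gapSeqs_succ, ih, Fin.forall_fin_succ]
    simp only [Fin.tail, Fin.castSucc_zero, Fin.succ_zero_eq_one, Fin.succ_last,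
      Fin.castSucc_succ]
    constructor
    · rintro ⟨⟨h1, h2⟩, h3, h4, h5⟩
      exact ⟨h1, ⟨h3, h4⟩, h5⟩
    · rintro ⟨h1, ⟨h3, h4⟩, h5⟩
      refine ⟨⟨h1, ?_⟩, h3, h4, h5⟩
      have : Monotone g := by
        rw [Fin.monotone_iff_le_succ]
        intro i
        induction i using Fin.cases with
        | zero => simp only [Fin.castSucc_zero, Fin.succ_zero_eq_one]; omega
        | succ i => have := h4 i; simp only [Fin.castSucc_succ]; omega
      exact (this (Fin.le_last 0)).trans h5

theorem card_gapSeqs_succ {n : ℕ} (e : Fin (n + 1) → ℕ) (lo m : ℕ) :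
    (gapSeqs (n + 1) e lo m).card =
      ∑ v ∈ Icc (lo + e 0) m, (gapSeqs n (Fin.tail e) v m).card := by
  rw [gapSeqs, card_biUnion]
  · refine sum_congr rfl fun v _ => card_image_of_injective _ ?_
    exact Fin.cons_right_injective (α := fun _ => ℕ) v
  · intro v _ w _ hvw
    rw [Function.onFun, disjoint_left]
    simp only [mem_image]
    rintro _ ⟨g, _, rfl⟩ ⟨g', _, h⟩
    exact hvw (by simpa using (congrFun h 0).symm)

open PowerSeries in
theorem one_sub_X_pow_mul_gapSeqs {n : ℕ} (e : Fin n → ℕ) (lo : ℕ) :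
    (1 - X : PowerSeries ℤ) ^ (n + 1) *
      PowerSeries.mk (fun s => ((gapSeqs n e lo (lo + s)).card : ℤ)) = X ^ (∑ i, e i) := by
  induction n generalizing lo with
  | zero =>
    simp only [gapSeqs, card_singleton, zero_add, pow_one, univ_eq_empty, sum_empty, pow_zero,
      Nat.cast_one]
    rw [mul_comm]
    exact PowerSeries.mk_one_mul_one_sub_eq_one ℤ
  | succ n ih =>
    set G : ℕ → ℤ := fun u => ((gapSeqs n (Fin.tail e) 0 (0 + u)).card : ℤ) with hG
    have hne : (1 - X : PowerSeries ℤ) ^ (n + 1) ≠ 0 := by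
      intro h
      have := ih (Fin.tail e) 0
      rw [h, zero_mul] at this
      exact (pow_ne_zero _ PowerSeries.X_ne_zero) this.symm
    have hindep : ∀ v u, ((gapSeqs n (Fin.tail e) v (v + u)).card : ℤ) = G u := by
      intro v u
      have h := mul_left_cancel₀ hne ((ih (Fin.tail e) v).trans (ih (Fin.tail e) 0).symm)
      simpa [hG] using congrArg (PowerSeries.coeff u) h
    have hcard : ∀ s, ((gapSeqs (n + 1) e lo (lo + s)).card : ℤ) =
        ∑ u ∈ range (s + 1 - e 0), G u := by
      intro s
      rw [card_gapSeqs_succ]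
      push_cast
      refine sum_bij' (fun v _ => lo + s - v) (fun u _ => lo + s - u) ?_ ?_ ?_ ?_ ?_
      · intro v hv; simp only [mem_Icc, mem_range] at hv ⊢; omega
      · intro v hv; simp only [mem_Icc, mem_range] at hv ⊢; omega
      · intro v hv; simp only [mem_Icc] at hv; omega
      · intro v hv; simp only [mem_range] at hv; omega
      · intro v hv
        simp only [mem_Icc] at hv
        rw [← hindep v (lo + s - v), Nat.add_sub_cancel' hv.2]
    have hmul : (1 - X : PowerSeries ℤ) *
        PowerSeries.mk (fun s => ((gapSeqs (n + 1) e lo (lo + s)).card : ℤ)) =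
        X ^ (e 0) * PowerSeries.mk G := by
      ext s
      rw [sub_mul, one_mul, map_sub, PowerSeries.coeff_X_pow_mul', PowerSeries.coeff_mk, hcard]
      cases s with
      | zero =>
        rw [PowerSeries.coeff_zero_X_mul, sub_zero]
        split_ifs with h
        · simp [Nat.le_zero.mp h]
        · have : 0 + 1 - e 0 = 0 := by omega
          simp [this]
      | succ s =>
        rw [PowerSeries.coeff_succ_X_mul, PowerSeries.coeff_mk, hcard]
        split_ifs with h
        · rw [show s + 1 + 1 - e 0 = (s + 1 - e 0) + 1 by omega, sum_range_succ]
          simp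
        · rw [show s + 1 + 1 - e 0 = 0 by omega, show s + 1 - e 0 = 0 by omega]
          simp
    have h := ih (Fin.tail e) 0
    rw [pow_succ, mul_assoc, hmul, Fin.sum_univ_succ, pow_add X]
    exact (mul_left_comm _ _ _).trans (congrArg _ h)

/-- The indicator sequence of the descents of `σ`, shifted by one position. -/
def descentGaps : {n : ℕ} → Equiv.Perm (Fin n) → Fin n → ℕ
  | 0, _ => Fin.elim0
  | n + 1, σ => Fin.cons 0 fun i : Fin n => if σ i.succ < σ i.castSucc then 1 else 0

theorem sum_descentGaps {n : ℕ} (σ : Equiv.Perm (Fin n)) : ∑ i, descentGaps σ i = permDes σ := by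
  cases n with
  | zero => simp [permDes, descentFinset]
  | succ n =>
    rw [Fin.sum_univ_succ]
    simp only [descentGaps, Fin.cons_zero, Fin.cons_succ, zero_add, permDes, descentFinset,
      permWord, sum_boole, Nat.cast_id]
    have hnext : ∀ i : Fin n, nextIdx i.castSucc = i.succ := by
      intro i
      apply Fin.ext
      simp [nextIdx, Nat.mod_eq_of_lt (Nat.succ_lt_succ i.2)]
    refine card_bij (fun i _ => i.castSucc) ?_ ?_ ?_
    · intro i hi
      simpa [hnext] using hi
    · intro i _ j _ h
      exact Fin.castSucc_injective _ h
    · intro i hi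
      obtain ⟨h1, h2⟩ := (mem_filter.mp hi).2
      have e : i = (⟨i, by omega⟩ : Fin n).castSucc := rfl
      rw [e, hnext] at h2
      exact ⟨⟨i, by omega⟩, by simpa using h2, e.symm⟩

theorem sort_eq_iff_mem_gapSeqs {n : ℕ} (σ : Equiv.Perm (Fin n)) (f : Fin n → ℕ) (m : ℕ) :
    (Tuple.sort f = σ ∧ ∀ i, f i ≤ m) ↔ f ∘ σ ∈ gapSeqs n (descentGaps σ) 0 m := by
  cases n with
  | zero =>
    simp only [gapSeqs, mem_singleton, IsEmpty.forall_iff, and_true]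
    exact ⟨fun _ => Subsingleton.elim _ _, fun _ => Subsingleton.elim _ _⟩
  | succ n =>
    rw [mem_gapSeqs, eq_comm, Tuple.eq_sort_iff]
    simp only [descentGaps, Fin.cons_zero, Fin.cons_succ, Function.comp]
    constructor
    · rintro ⟨⟨h1, h2⟩, h3⟩
      refine ⟨Nat.zero_le _, fun i => ?_, h3 _⟩
      have hle : f (σ i.castSucc) ≤ f (σ i.succ) := h1 (Fin.castSucc_lt_succ).le
      split_ifs with h
      · rcases hle.lt_or_eq with hlt | heq
        · exact hlt
        · exact absurd (h2 _ _ Fin.castSucc_lt_succ heq) (not_lt.mpr h.le)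
      · simpa using hle
    · rintro ⟨-, h2, h3⟩
      have hmono : StrictMono fun i => toLex (f (σ i), σ i) := by
        rw [Fin.strictMono_iff_lt_succ]
        intro i
        rw [Prod.Lex.toLex_lt_toLex]
        have := h2 i
        have hne : σ i.castSucc ≠ σ i.succ := fun h =>
          (Fin.castSucc_lt_succ (i := i)).ne (σ.injective h)
        split_ifs at this with h
        · left; simpa using this
        · rcases (show f (σ i.castSucc) ≤ f (σ i.succ) by simpa using this).lt_or_eq with hlt | heq
          · exact Or.inl hlt
          · exact Or.inr ⟨heq, lt_of_le_of_ne (not_lt.mp h) hne⟩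
      have hm : Monotone (f ∘ σ) := by
        intro i j hij
        have := hmono.monotone hij
        rw [Prod.Lex.toLex_le_toLex] at this
        rcases this with h | h
        · exact h.le
        · exact h.1.le
      refine ⟨⟨hm, fun i j hij heq => ?_⟩, fun i => ?_⟩
      · have := hmono hij
        rw [Prod.Lex.toLex_lt_toLex] at this
        rcases this with h | h
        · exact absurd heq h.ne
        · exact h.2
      · have := hm (Fin.le_last (σ.symm i))
        simp only [Function.comp, Equiv.apply_symm_apply] at this
        exact this.trans h3

theorem card_filter_sort_eq {n : ℕ} (σ : Equiv.Perm (Fin n)) (m : ℕ) :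
    ((Fintype.piFinset fun _ : Fin n => range (m + 1)).filter fun f => Tuple.sort f = σ).card =
      (gapSeqs n (descentGaps σ) 0 m).card := by
  refine card_bij' (fun f _ => f ∘ σ) (fun g _ => g ∘ σ.symm) ?_ ?_ ?_ ?_
  · intro f hf
    rw [← sort_eq_iff_mem_gapSeqs]
    simp only [mem_filter, Fintype.mem_piFinset, mem_range, Nat.lt_succ_iff] at hf
    exact ⟨hf.2, hf.1⟩
  · intro g hg
    have h : (g ∘ σ.symm) ∘ σ = g := by funext i; simp
    rw [← h, ← sort_eq_iff_mem_gapSeqs] at hg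
    simp only [mem_filter, Fintype.mem_piFinset, mem_range, Nat.lt_succ_iff]
    exact ⟨hg.2, hg.1⟩
  · intro f _; funext i; simp
  · intro g _; funext i; simp

/-- The descent generating function of the linear extensions of a naturally labeled relation
`r` on `Fin n`, in terms of the number of `r`-monotone maps to `{0, …, m}`. -/
theorem sum_X_pow_permDes {n : ℕ} (r : Fin n → Fin n → Prop) (hr : ∀ i j, r i j → i < j)
    (S : Finset (Equiv.Perm (Fin n)))
    (hS : ∀ σ, σ ∈ S ↔ ∀ i j, r i j → σ.symm i < σ.symm j)
    (N : ℕ → Finset (Fin n → ℕ))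
    (hN : ∀ m f, f ∈ N m ↔ (∀ i, f i ≤ m) ∧ ∀ i j, r i j → f i ≤ f j) :
    ∑ σ ∈ S, (PowerSeries.X : PowerSeries ℤ) ^ permDes σ =
      (1 - PowerSeries.X) ^ (n + 1) * PowerSeries.mk fun m => ((N m).card : ℤ) := by
  have hcard : ∀ m, (N m).card = ∑ σ ∈ S, (gapSeqs n (descentGaps σ) 0 m).card := by
    intro m
    have hmaps : ∀ f ∈ N m, Tuple.sort f ∈ S := by
      intro f hf
      rw [hN] at hf
      rw [hS]
      intro i j hij
      by_contra hlt
      rw [not_lt] at hlt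
      have hs := (Tuple.eq_sort_iff (f := f) (σ := Tuple.sort f)).mp rfl
      have h1 : f j ≤ f i := by simpa using hs.1 hlt
      have hlt' := lt_of_le_of_ne hlt
        (fun h => (hr i j hij).ne' ((Tuple.sort f).symm.injective h))
      have := hs.2 _ _ hlt' (by simpa using le_antisymm h1 (hf.2 i j hij))
      simp only [Equiv.apply_symm_apply] at this
      exact absurd (hr i j hij) this.not_gt
    rw [card_eq_sum_card_fiberwise hmaps]
    refine sum_congr rfl fun σ hσ => ?_
    rw [← card_filter_sort_eq]
    congr 1
    ext f
    simp only [mem_filter, hN, Fintype.mem_piFinset, mem_range, Nat.lt_succ_iff]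
    constructor
    · rintro ⟨⟨h1, _⟩, h3⟩
      exact ⟨h1, h3⟩
    · rintro ⟨h1, h3⟩
      refine ⟨⟨h1, fun i j hij => ?_⟩, h3⟩
      have hs := (Tuple.eq_sort_iff.mp h3.symm).1
      simpa using hs ((hS σ).mp hσ i j hij).le
  have hmk : (PowerSeries.mk fun m => ((N m).card : ℤ)) =
      ∑ σ ∈ S, PowerSeries.mk fun s => ((gapSeqs n (descentGaps σ) 0 (0 + s)).card : ℤ) := by
    ext m
    simp [hcard]
  rw [hmk, mul_sum]
  refine sum_congr rfl fun σ _ => ?_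
  rw [one_sub_X_pow_mul_gapSeqs, sum_descentGaps]

theorem List.nodup_flatMap_of_unique {α β : Type*} {l : List α} {f : α → List β} (hl : l.Nodup)
    (hf : ∀ x ∈ l, (f x).Nodup)
    (h : ∀ x ∈ l, ∀ y ∈ l, ∀ e, e ∈ f x → e ∈ f y → x = y) : (l.flatMap f).Nodup := by
  rw [List.nodup_flatMap]
  refine ⟨hf, ?_⟩
  refine hl.imp_of_mem fun {x y} hx hy hxy => ?_
  intro e he he'
  exact hxy (h x hx y hy e he he')

theorem List.sum_map_flatMap {α β M : Type*} [AddMonoid M] (l : List α) (f : α → List β)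
    (w : β → M) : ((l.flatMap f).map w).sum = (l.map fun a => ((f a).map w).sum).sum := by
  induction l with
  | nil => simp
  | cons a l ih => simp [ih]

theorem List.sum_map_range' {M : Type*} [AddCommMonoid M] (w : ℕ → M) (s k : ℕ) :
    ((List.range' s k).map w).sum = ∑ i ∈ Finset.range k, w (s + i) := by
  induction k generalizing s with
  | zero => simp
  | succ k ih =>
    rw [List.range'_succ, List.map_cons, List.sum_cons, ih, Finset.sum_range_succ', add_comm]
    congr 1
    refine Finset.sum_congr rfl fun i _ => ?_
    rw [Nat.add_assoc, Nat.add_comm 1]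

/-- The up step at position `s` of a path with heights `h` is matched with the down step at
position `t`. -/
def IsMatch (h : ℕ → ℤ) (s t : ℕ) : Prop :=
  s < t ∧ h (t + 1) = h s ∧ ∀ y, s < y → y ≤ t → h s < h y

namespace PlaneForest

/-- The heights `h` from position `p` on trace the contour of a forest. -/
def Shape : PlaneForest → ℕ → (ℕ → ℤ) → Prop
  | nil, _, _ => True
  | node a r, p, h => h (p + 1) = h p + 1 ∧ Shape a (p + 1) h ∧
      h (p + 1 + 2 * a.size + 1) = h p ∧ Shape r (p + 1 + 2 * a.size + 1) h

theorem Shape.end_eq {t : PlaneForest} {p : ℕ} {h : ℕ → ℤ} (hs : Shape t p h) :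
    h (p + 2 * t.size) = h p := by
  induction t generalizing p with
  | nil => simp [size]
  | node a r _ ihr =>
    obtain ⟨_, _, h3, h4⟩ := hs
    rw [← h3, ← ihr h4, size]
    congr 1
    ring

theorem Shape.le {t : PlaneForest} {p : ℕ} {h : ℕ → ℤ} (hs : Shape t p h) (y : ℕ) (hy : p ≤ y)
    (hy' : y ≤ p + 2 * t.size) : h p ≤ h y := by
  induction t generalizing p with
  | nil =>
    have : y = p := by simp only [size] at hy'; omega
    rw [this]
  | node a r iha ihr =>
    obtain ⟨h1, h2, h3, h4⟩ := hs
    rcases eq_or_lt_of_le hy with rfl | hlt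
    · exact le_rfl
    simp only [size] at hy'
    by_cases hya : y ≤ p + 1 + 2 * a.size
    · have := iha h2 hlt hya
      omega
    · have := ihr h4 (by omega) (by omega)
      omega

theorem Shape.isMatch_root {a r : PlaneForest} {p : ℕ} {h : ℕ → ℤ} (hs : Shape (node a r) p h) :
    IsMatch h p (p + 1 + 2 * a.size) := by
  obtain ⟨h1, h2, h3, h4⟩ := hs
  refine ⟨by omega, h3, fun y hy hy' => ?_⟩
  have := h2.le y hy hy'
  omega

theorem Shape.isMatch_cases {a r : PlaneForest} {p : ℕ} {h : ℕ → ℤ} (hs : Shape (node a r) p h)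
    {s t : ℕ} (hm : IsMatch h s t) (hp : p ≤ s) :
    (s = p ∧ t = p + 1 + 2 * a.size) ∨ (p + 1 ≤ s ∧ t < p + 1 + 2 * a.size) ∨
      p + 1 + 2 * a.size + 1 ≤ s := by
  obtain ⟨-, h3, hin⟩ := hs.isMatch_root
  obtain ⟨hst, hts, hm⟩ := hm
  rcases eq_or_lt_of_le hp with rfl | hlt
  · left
    refine ⟨rfl, ?_⟩
    rcases lt_trichotomy t (p + 1 + 2 * a.size) with hc | hc | hc
    · have := hin (t + 1) (by omega) (by omega)
      omega
    · exact hc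
    · have := hm (p + 1 + 2 * a.size + 1) (by omega) (by omega)
      omega
  · right
    by_contra hcon
    rw [not_or] at hcon
    have h5 := hin s hlt (by omega)
    rcases lt_trichotomy t (p + 1 + 2 * a.size) with hc | rfl | hc
    · omega
    · omega
    · have := hm (p + 1 + 2 * a.size + 1) (by omega) (by omega)
      omega

theorem exists_shape (n p : ℕ) (h : ℕ → ℤ)
    (hstep : ∀ x, p ≤ x → x < p + 2 * n → h (x + 1) = h x + 1 ∨ h (x + 1) = h x - 1)
    (hend : h (p + 2 * n) = h p) (hle : ∀ x, p ≤ x → x ≤ p + 2 * n → h p ≤ h x) :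
    ∃ t : PlaneForest, t.size = n ∧ Shape t p h := by
  induction n using Nat.strong_induction_on generalizing p with
  | _ n ih =>
    rcases Nat.eq_zero_or_pos n with rfl | hn
    · exact ⟨nil, rfl, trivial⟩
    have hpar : ∀ k, k ≤ 2 * n → (h (p + k) - h p - k) % 2 = 0 := by
      intro k
      induction k with
      | zero => simp
      | succ k ihk =>
        intro hk
        have h1 := ihk (by omega)
        have h2 := hstep (p + k) (by omega) (by omega)
        rw [← add_assoc]
        push_cast
        omega
    have hex : ∃ q, p < q ∧ h q = h p := ⟨p + 2 * n, by omega, hend⟩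
    classical
    set q := Nat.find hex with hq
    obtain ⟨hq1, hq2⟩ : p < q ∧ h q = h p := Nat.find_spec hex
    have hq3 : q ≤ p + 2 * n := Nat.find_min' hex ⟨by omega, hend⟩
    have hq4 : ∀ y, p < y → y < q → h p + 1 ≤ h y := by
      intro y hy hy'
      have h1 := Nat.find_min hex hy'
      have h2 := hle y hy.le (by omega)
      rcases h2.lt_or_eq with h3 | h3
      · omega
      · exact absurd ⟨hy, h3.symm⟩ h1
    have hup : h (p + 1) = h p + 1 := by
      have h1 := hstep p le_rfl (by omega)
      have h2 := hle (p + 1) (by omega) (by omega)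
      omega
    have hqpar := hpar (q - p) (by omega)
    rw [show p + (q - p) = q by omega, hq2] at hqpar
    obtain ⟨k, hk⟩ : ∃ k, q = p + 1 + 2 * k + 1 := ⟨(q - p) / 2 - 1, by
      have : q ≠ p + 1 := fun hc => by rw [hc] at hq2; omega
      omega⟩
    have hdown : h (p + 1 + 2 * k) = h (p + 1) := by
      have h1 := hstep (p + 1 + 2 * k) (by omega) (by omega)
      rw [← hk, hq2] at h1
      have h2 := hq4 (p + 1 + 2 * k) (by omega) (by omega)
      omega
    obtain ⟨a, ha, hsa⟩ := ih k (by omega) (p + 1)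
      (fun x h1 h2 => hstep x (by omega) (by omega)) hdown
      (fun x h1 h2 => by have := hq4 x (by omega) (by omega); omega)
    obtain ⟨r, hr, hsr⟩ := ih (n - k - 1) (by omega) q
      (fun x h1 h2 => hstep x (by omega) (by omega))
      (by rw [hq2, ← hend]; congr 1; omega)
      (fun x h1 h2 => by rw [hq2]; exact hle x (by omega) (by omega))
    refine ⟨node a r, by rw [size]; omega, hup, hsa, ?_, ?_⟩
    · rw [ha, ← hk, hq2]
    · rw [ha, ← hk]; exact hsr

/-- Final height of a list of (joined level count, next height) pairs starting at height `i`. -/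
def endHt : ℕ → List (ℕ × ℕ) → ℕ
  | i, [] => i
  | _, e :: L => endHt e.2 L

/-- Total descent of the heights along a list. -/
def descentWt : ℕ → List (ℕ × ℕ) → ℕ
  | _, [] => 0
  | i, e :: L => (i - e.2) + descentWt e.2 L

theorem endHt_append (i : ℕ) (L L' : List (ℕ × ℕ)) :
    endHt i (L ++ L') = endHt (endHt i L) L' := by
  induction L generalizing i with
  | nil => rfl
  | cons e L ih => exact ih e.2

theorem descentWt_append (i : ℕ) (L L' : List (ℕ × ℕ)) :
    descentWt i (L ++ L') = descentWt i L + descentWt (endHt i L) L' := by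
  induction L generalizing i with
  | nil => simp [descentWt, endHt]
  | cons e L ih => simp only [List.cons_append, descentWt, endHt, ih]; ring

/-- The possible heights after an up step starting at height `i`. -/
def upOptions (i : ℕ) : List ℕ := if i = 0 then [0] else [i, i - 1]

/-- All configurations over a forest with floor `f`, starting at height `i`. -/
def configs : PlaneForest → ℕ → ℕ → List (List (ℕ × ℕ))
  | nil, _, _ => [[]]
  | node a r, f, i =>
    (upOptions i).flatMap fun c₁ => (List.range' f (c₁ + 1 - f)).flatMap fun β =>
      (configs a β c₁).flatMap fun La => [endHt c₁ La, endHt c₁ La + 1].flatMap fun c₃ =>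
        (configs r f c₃).map fun Lr => (β, c₁) :: (La ++ (β, c₃) :: Lr)

theorem mem_configs_node {a r : PlaneForest} {f i : ℕ} {L : List (ℕ × ℕ)} :
    L ∈ configs (node a r) f i ↔ ∃ c₁ ∈ upOptions i, ∃ β ∈ List.range' f (c₁ + 1 - f),
      ∃ La ∈ configs a β c₁, ∃ c₃ ∈ [endHt c₁ La, endHt c₁ La + 1], ∃ Lr ∈ configs r f c₃,
        (β, c₁) :: (La ++ (β, c₃) :: Lr) = L := by
  simp only [configs, List.mem_flatMap, List.mem_map]

theorem length_of_mem_configs {t : PlaneForest} {f i : ℕ} {L : List (ℕ × ℕ)}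
    (hL : L ∈ configs t f i) : L.length = 2 * t.size := by
  induction t generalizing f i L with
  | nil => simp [configs] at hL; simp [hL, size]
  | node a r iha ihr =>
    obtain ⟨c₁, -, β, -, La, ha, c₃, -, Lr, hr, rfl⟩ := mem_configs_node.mp hL
    simp only [List.length_cons, List.length_append, iha ha, ihr hr, size]
    ring

theorem nodup_configs (t : PlaneForest) (f i : ℕ) : (configs t f i).Nodup := by
  induction t generalizing f i with
  | nil => simp [configs]
  | node a r iha ihr =>
    have hopt : (upOptions i).Nodup := by
      unfold upOptions
      split_ifs
      · simp
      · simp; omega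
    refine List.nodup_flatMap_of_unique hopt (fun c₁ _ => ?_) ?_
    · refine List.nodup_flatMap_of_unique (List.nodup_range' (step := 1)) (fun β _ => ?_) ?_
      · refine List.nodup_flatMap_of_unique (iha β c₁) (fun La _ => ?_) ?_
        · refine List.nodup_flatMap_of_unique (by simp) (fun c₃ _ => ?_) ?_
          · refine (ihr f c₃).map fun L L' h => ?_
            simpa using h
          · intro x _ y _ e he he'
            simp only [List.mem_map] at he he'
            obtain ⟨_, _, rfl⟩ := he
            obtain ⟨_, _, h⟩ := he'
            simp only [List.cons.injEq, List.append_cancel_left_eq, Prod.mk.injEq] at h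
            exact h.2.1.2.symm
        · intro x hx y hy e he he'
          simp only [List.mem_flatMap, List.mem_map] at he he'
          obtain ⟨_, _, _, _, rfl⟩ := he
          obtain ⟨_, _, _, _, h⟩ := he'
          simp only [List.cons.injEq] at h
          exact (List.append_inj h.2 ((length_of_mem_configs hy).trans
            (length_of_mem_configs hx).symm)).1.symm
      · intro x _ y _ e he he'
        simp only [List.mem_flatMap, List.mem_map] at he he'
        obtain ⟨_, _, _, _, _, _, rfl⟩ := he
        obtain ⟨_, _, _, _, _, _, h⟩ := he'
        simp only [List.cons.injEq, Prod.mk.injEq] at h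
        exact h.1.1.symm
    · intro x _ y _ e he he'
      simp only [List.mem_flatMap, List.mem_map] at he he'
      obtain ⟨_, _, _, _, _, _, _, _, rfl⟩ := he
      obtain ⟨_, _, _, _, _, _, _, _, h⟩ := he'
      simp only [List.cons.injEq, Prod.mk.injEq] at h
      exact h.1.2.symm

theorem sum_configs {R : Type*} [CommRing R] (z : R) (t : PlaneForest) (φ : ℕ → R) (f j : ℕ) :
    ((configs t f (f + j)).map fun L => z ^ descentWt (f + j) L * φ (endHt (f + j) L)).sum =
      transfer z t (fun x => φ (x + f)) j := by
  induction t generalizing φ f j with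
  | nil => simp [configs, transfer, descentWt, endHt, add_comm]
  | node a r iha ihr =>
    set ψ : ℕ → R := fun y => transfer z r (fun x => φ (x + f)) y +
      transfer z r (fun x => φ (x + f)) (y + 1) with hψ
    have hin : ∀ k c, f + k ≤ c → ((configs a (f + k) c).map fun La =>
        z ^ descentWt c La * ([endHt c La, endHt c La + 1].map fun c₃ =>
          ((configs r f c₃).map fun Lr => z ^ descentWt c₃ Lr * φ (endHt c₃ Lr)).sum).sum).sum =
        transfer z a (fun x => ψ (x + k)) (c - (f + k)) := by
      intro k c hc
      obtain ⟨d, rfl⟩ := Nat.exists_eq_add_of_le hc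
      rw [iha (fun y => ([y, y + 1].map fun c₃ =>
          ((configs r f c₃).map fun Lr => z ^ descentWt c₃ Lr * φ (endHt c₃ Lr)).sum).sum)]
      rw [Nat.add_sub_cancel_left]
      congr 1
      funext x
      simp only [List.map_cons, List.map_nil, List.sum_cons, List.sum_nil, add_zero]
      rw [show x + (f + k) = f + (x + k) by ring, add_assoc f, ihr, ihr]
    have hlevel : ∀ i c, (((List.range' f (c + 1 - f)).flatMap fun β =>
        (configs a β c).flatMap fun La => [endHt c La, endHt c La + 1].flatMap fun c₃ =>
        (configs r f c₃).map fun Lr => (β, c) :: (La ++ (β, c₃) :: Lr)).map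
          fun L => z ^ descentWt i L * φ (endHt i L)).sum =
        z ^ (i - c) * if f ≤ c then floorSum z a ψ (c - f) else 0 := by
      intro i c
      rw [List.sum_map_flatMap, List.sum_map_range']
      have : ∀ k ∈ range (c + 1 - f), (((configs a (f + k) c).flatMap fun La =>
          [endHt c La, endHt c La + 1].flatMap fun c₃ =>
          (configs r f c₃).map fun Lr => (f + k, c) :: (La ++ (f + k, c₃) :: Lr)).map
          fun L => z ^ descentWt i L * φ (endHt i L)).sum =
          z ^ (i - c) * transfer z a (fun x => ψ (x + k)) (c - f - k) := by
        intro k hk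
        rw [mem_range] at hk
        rw [Nat.sub_sub, ← hin k c (by omega), ← List.sum_map_mul_left, List.sum_map_flatMap]
        congr 1
        refine List.map_congr_left fun La _ => ?_
        rw [← mul_assoc, ← List.sum_map_mul_left, List.sum_map_flatMap]
        congr 1
        refine List.map_congr_left fun c₃ hc₃ => ?_
        rw [← List.sum_map_mul_left, List.map_map]
        congr 1
        refine List.map_congr_left fun Lr _ => ?_
        have h0 : endHt c La - c₃ = 0 := by
          simp only [List.mem_cons, List.not_mem_nil, or_false] at hc₃
          omega
        simp only [Function.comp, descentWt, endHt, descentWt_append, endHt_append, h0]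
        ring
      rw [Finset.sum_congr rfl this, ← Finset.mul_sum]
      congr 1
      split_ifs with hfc
      · rw [floorSum, show c + 1 - f = c - f + 1 by omega]
      · rw [show c + 1 - f = 0 by omega]
        simp
    rw [transfer_node, configs, List.sum_map_flatMap]
    simp only [hlevel]
    rw [upOptions]
    by_cases hj : j = 0
    · rw [if_pos hj, add_zero]
      by_cases h0 : f + j = 0
      · rw [if_pos h0, List.map_cons, List.map_nil, List.sum_cons, List.sum_nil, add_zero,
          if_pos (by omega), h0, hj, show 0 - f = 0 by omega, pow_zero, one_mul]
      · rw [if_neg h0, List.map_cons, List.map_cons, List.map_nil, List.sum_cons, List.sum_cons,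
          List.sum_nil, add_zero, if_pos (by omega), if_neg (by omega), mul_zero, add_zero,
          Nat.sub_self, pow_zero, one_mul, Nat.add_sub_cancel_left]
    · rw [if_neg (by omega), if_neg hj]
      simp only [List.map_cons, List.map_nil, List.sum_cons, List.sum_nil, add_zero, Nat.sub_self,
        pow_zero, one_mul, if_pos (Nat.le_add_right f j), Nat.add_sub_cancel_left]
      rw [if_pos (by omega), show f + j - (f + j - 1) = 1 by omega,
        show f + j - 1 - f = j - 1 by omega, pow_one]

end PlaneForest

/-- The list recording the joined level counts `b` and the heights `c` over a segment. -/
def segList (c b : ℕ → ℕ) (p len : ℕ) : List (ℕ × ℕ) :=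
  (List.range' p len).map fun x => (b x, c (x + 1))

theorem segList_succ (c b : ℕ → ℕ) (p len : ℕ) :
    segList c b p (len + 1) = (b p, c (p + 1)) :: segList c b (p + 1) len := by
  simp [segList, List.range'_succ]

theorem segList_add (c b : ℕ → ℕ) (p k l : ℕ) :
    segList c b p (k + l) = segList c b p k ++ segList c b (p + k) l := by
  simp [segList, ← List.map_append]

theorem length_segList (c b : ℕ → ℕ) (p len : ℕ) : (segList c b p len).length = len := by
  simp [segList]

theorem endHt_segList (c b : ℕ → ℕ) (p len : ℕ) :
    PlaneForest.endHt (c p) (segList c b p len) = c (p + len) := by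
  induction len generalizing p with
  | zero => rfl
  | succ k ih =>
    rw [segList_succ, PlaneForest.endHt, ih]
    congr 1
    ring

theorem descentWt_segList (c b : ℕ → ℕ) (p len : ℕ) :
    PlaneForest.descentWt (c p) (segList c b p len) =
      ∑ k ∈ range len, (c (p + k) - c (p + k + 1)) := by
  induction len generalizing p with
  | zero => rfl
  | succ k ih =>
    rw [segList_succ, PlaneForest.descentWt, ih, Finset.sum_range_succ', add_comm]
    congr 1
    refine Finset.sum_congr rfl fun i _ => ?_
    rw [show p + 1 + i = p + (i + 1) by ring]

/-- Conditions describing the heights `c` and joined level counts `b` of a cover-inclusive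
tiling, over a segment `[p, q)` of a path with heights `h` and with all joined counts at
least `f`. -/
structure SegOK (h : ℕ → ℤ) (c b : ℕ → ℕ) (f p q : ℕ) : Prop where
  up : ∀ x, p ≤ x → x < q → h (x + 1) = h x + 1 →
    b x ≤ c (x + 1) ∧ (c x = c (x + 1) ∨ c x = c (x + 1) + 1)
  down : ∀ x, p ≤ x → x < q → h (x + 1) = h x - 1 →
    b x ≤ c x ∧ (c (x + 1) = c x ∨ c (x + 1) = c x + 1)
  nest : ∀ s t, IsMatch h s t → p ≤ s → t < q → ∀ y, s ≤ y → y ≤ t → b s ≤ b y ∧ b t ≤ b y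
  floor : ∀ x, p ≤ x → x < q → f ≤ b x

namespace PlaneForest

theorem le_endHt_of_mem_configs {t : PlaneForest} {f i : ℕ} {L : List (ℕ × ℕ)}
    (hL : L ∈ configs t f i) (hf : f ≤ i) : f ≤ endHt i L := by
  induction t generalizing f i L with
  | nil => simp [configs] at hL; simp [hL, endHt, hf]
  | node a r iha ihr =>
    obtain ⟨c₁, -, β, hβ, La, ha, c₃, hc₃, Lr, hr, rfl⟩ := mem_configs_node.mp hL
    rw [List.mem_range'_1] at hβ
    simp only [endHt, endHt_append]
    have h1 := iha ha (by omega)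
    simp only [List.mem_cons, List.not_mem_nil, or_false] at hc₃
    exact ihr hr (by omega)

theorem segList_mem_configs_node {a r : PlaneForest} {c b : ℕ → ℕ} {f p q : ℕ}
    (hq : q = p + 1 + 2 * a.size) :
    segList c b p (2 * (node a r).size) ∈ configs (node a r) f (c p) ↔
      (c p = c (p + 1) ∨ c p = c (p + 1) + 1) ∧ f ≤ b p ∧ b p ≤ c (p + 1) ∧
      segList c b (p + 1) (2 * a.size) ∈ configs a (b p) (c (p + 1)) ∧ b q = b p ∧
      (c (q + 1) = c q ∨ c (q + 1) = c q + 1) ∧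
      segList c b (q + 1) (2 * r.size) ∈ configs r f (c (q + 1)) := by
  have hsplit : segList c b p (2 * (node a r).size) = (b p, c (p + 1)) ::
      (segList c b (p + 1) (2 * a.size) ++ (b q, c (q + 1)) ::
        segList c b (q + 1) (2 * r.size)) := by
    rw [size, show 2 * (a.size + 1 + r.size) = 2 * a.size + (2 * r.size + 1) + 1 by ring,
      segList_succ, segList_add, segList_succ, hq]
  have hend : endHt (c (p + 1)) (segList c b (p + 1) (2 * a.size)) = c q := by
    rw [endHt_segList, hq]
  have hopt : c (p + 1) ∈ upOptions (c p) ↔ (c p = c (p + 1) ∨ c p = c (p + 1) + 1) := by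
    unfold upOptions
    split_ifs <;> simp <;> omega
  rw [hsplit, mem_configs_node]
  constructor
  · rintro ⟨c₁, h1, β, h2, La, h3, c₃, h4, Lr, h5, h6⟩
    simp only [List.cons.injEq, Prod.mk.injEq] at h6
    obtain ⟨⟨rfl, rfl⟩, h6⟩ := h6
    obtain ⟨rfl, h7⟩ := List.append_inj h6
      ((length_of_mem_configs h3).trans (length_segList ..).symm)
    simp only [List.cons.injEq, Prod.mk.injEq] at h7
    obtain ⟨⟨h7, rfl⟩, rfl⟩ := h7
    rw [List.mem_range'_1] at h2
    simp only [List.mem_cons, List.not_mem_nil, or_false, hend] at h4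
    exact ⟨hopt.mp h1, h2.1, by omega, h3, h7.symm, h4, h5⟩
  · rintro ⟨h1, h2, h3, h4, h5, h6, h7⟩
    refine ⟨_, hopt.mpr h1, b p, ?_, _, h4, c (q + 1), ?_, _, h7, ?_⟩
    · rw [List.mem_range'_1]; omega
    · rw [hend]; simpa using h6
    · rw [h5]

theorem segList_mem_configs_iff {t : PlaneForest} {h : ℕ → ℤ} {c b : ℕ → ℕ} {f p : ℕ}
    (hs : Shape t p h) :
    segList c b p (2 * t.size) ∈ configs t f (c p) ↔ SegOK h c b f p (p + 2 * t.size) := by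
  induction t generalizing f p with
  | nil =>
    simp only [size, configs, segList]
    refine ⟨fun _ => ⟨?_, ?_, ?_, ?_⟩, fun _ => by simp⟩
    · intros; omega
    · intros; omega
    · rintro s t ⟨hst, -⟩; intros; omega
    · intros; omega
  | node a r iha ihr =>
    have hroot := hs.isMatch_root
    have hcases := fun {s t} => hs.isMatch_cases (s := s) (t := t)
    obtain ⟨h1, h2, h3, h4⟩ := hs
    have hae := h2.end_eq
    obtain ⟨q, hq⟩ : ∃ q, q = p + 1 + 2 * a.size := ⟨_, rfl⟩
    have hend : p + 2 * (node a r).size = q + 1 + 2 * r.size := by rw [hq, size]; ring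
    rw [segList_mem_configs_node hq, hend]
    rw [← hq] at hroot hcases h3 h4 hae
    specialize iha (f := b p) h2
    specialize ihr (f := f) h4
    rw [← hq] at iha
    have hfloor := fun hL => le_endHt_of_mem_configs (f := b p) (i := c (p + 1))
      (L := segList c b (p + 1) (2 * a.size)) (t := a) hL
    rw [endHt_segList, ← hq] at hfloor
    constructor
    · rintro ⟨k1, k2, k3, k4, k5, k6, k7⟩
      have k8 := hfloor k4 k3
      rw [iha] at k4
      rw [ihr] at k7
      have hb : ∀ y, p ≤ y → y ≤ q → b p ≤ b y := by
        intro y hy hy'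
        rcases eq_or_lt_of_le hy with rfl | hy
        · exact le_rfl
        rcases eq_or_lt_of_le hy' with rfl | hy'
        · exact k5.ge
        exact k4.floor y hy hy'
      refine ⟨fun x hx hx' hu => ?_, fun x hx hx' hu => ?_, ?_, fun x hx hx' => ?_⟩
      · rcases lt_trichotomy x q with hc | rfl | hc
        · rcases eq_or_lt_of_le hx with rfl | hx
          · exact ⟨k3, k1⟩
          · exact k4.up x hx hc hu
        · omega
        · exact k7.up x hc hx' hu
      · rcases lt_trichotomy x q with hc | rfl | hc
        · rcases eq_or_lt_of_le hx with rfl | hx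
          · omega
          · exact k4.down x hx hc hu
        · exact ⟨by omega, k6⟩
        · exact k7.down x hc hx' hu
      · intro s t hm hps htq y hy hy'
        rcases hcases hm hps with ⟨rfl, rfl⟩ | ⟨hx, hx'⟩ | hx
        · have := hb y hy hy'
          omega
        · exact k4.nest s t hm hx hx' y hy hy'
        · exact k7.nest s t hm hx htq y hy hy'
      · by_cases hc : x ≤ q
        · exact k2.trans (hb x hx hc)
        · exact k7.floor x (by omega) hx'
    · intro hok
      have hpq : p < q := by omega
      have hup := hok.up p le_rfl (by omega) h1
      have hdown := hok.down q hpq.le (by omega) (by omega)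
      have hnest := hok.nest p q hroot le_rfl (by omega)
      refine ⟨hup.2, hok.floor p le_rfl (by omega), hup.1, iha.mpr ⟨?_, ?_, ?_, ?_⟩, ?_, hdown.2,
        ihr.mpr ⟨?_, ?_, ?_, ?_⟩⟩
      · exact fun x hx hx' => hok.up x (by omega) (by omega)
      · exact fun x hx hx' => hok.down x (by omega) (by omega)
      · exact fun s t hm hx hx' => hok.nest s t hm (by omega) (by omega)
      · exact fun x hx hx' => (hnest x (by omega) (by omega)).1
      · exact le_antisymm (hnest p le_rfl hpq.le).2 (hnest q hpq.le le_rfl).1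
      · exact fun x hx hx' => hok.up x (by omega) (by omega)
      · exact fun x hx hx' => hok.down x (by omega) (by omega)
      · exact fun s t hm hx hx' => hok.nest s t hm (by omega) (by omega)
      · exact fun x hx hx' => hok.floor x (by omega) (by omega)

end PlaneForest

theorem exists_segList_eq (L : List (ℕ × ℕ)) : ∃ c b : ℕ → ℕ, c 0 = 0 ∧
    segList c b 0 L.length = L ∧ ∀ x, L.length ≤ x → b x = 0 := by
  refine ⟨fun x => if x = 0 then 0 else (L.getD (x - 1) 0).2, fun x => (L.getD x 0).1, rfl,
    List.ext_getElem (by simp [segList]) fun i h1 h2 => by simp [segList, h2], fun x hx => ?_⟩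
  simp [List.getElem?_eq_none hx]

/-- The positions of the up steps in a segment. -/
def upSteps (h : ℕ → ℤ) (p len : ℕ) : List ℕ :=
  (List.range' p len).filter fun x => decide (h x < h (x + 1))

theorem mem_upSteps {h : ℕ → ℤ} {p len x : ℕ} :
    x ∈ upSteps h p len ↔ (p ≤ x ∧ x < p + len) ∧ h x < h (x + 1) := by
  simp [upSteps, List.mem_range'_1]

theorem upSteps_sorted (h : ℕ → ℤ) (p len : ℕ) : (upSteps h p len).Pairwise (· < ·) :=
  List.Pairwise.filter _ List.pairwise_lt_range'

namespace PlaneForest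

/-- All order-preserving labellings of a forest with values in `{lo, …, m}`, listed in
preorder. -/
def labellings : PlaneForest → ℕ → ℕ → List (List ℕ)
  | nil, _, _ => [[]]
  | node a r, lo, m => (List.range' lo (m + 1 - lo)).flatMap fun v =>
      (labellings a v m).flatMap fun La => (labellings r lo m).map fun Lr => v :: (La ++ Lr)

theorem mem_labellings_node {a r : PlaneForest} {lo m : ℕ} {L : List ℕ} :
    L ∈ labellings (node a r) lo m ↔ ∃ v ∈ List.range' lo (m + 1 - lo),
      ∃ La ∈ labellings a v m, ∃ Lr ∈ labellings r lo m, v :: (La ++ Lr) = L := by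
  simp only [labellings, List.mem_flatMap, List.mem_map]

theorem length_of_mem_labellings {t : PlaneForest} {lo m : ℕ} {L : List ℕ}
    (hL : L ∈ labellings t lo m) : L.length = t.size := by
  induction t generalizing lo m L with
  | nil => simp [labellings] at hL; simp [hL, size]
  | node a r iha ihr =>
    obtain ⟨v, -, La, ha, Lr, hr, rfl⟩ := mem_labellings_node.mp hL
    simp only [List.length_cons, List.length_append, iha ha, ihr hr, size]
    ring

theorem nodup_labellings (t : PlaneForest) (lo m : ℕ) : (labellings t lo m).Nodup := by
  induction t generalizing lo m with
  | nil => simp [labellings]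
  | node a r iha ihr =>
    refine List.nodup_flatMap_of_unique (List.nodup_range' (step := 1)) (fun v _ => ?_) ?_
    · refine List.nodup_flatMap_of_unique (iha v m) (fun La _ => ?_) ?_
      · refine (ihr lo m).map fun L L' h => ?_
        simpa using h
      · intro x hx y hy e he he'
        simp only [List.mem_map] at he he'
        obtain ⟨_, _, rfl⟩ := he
        obtain ⟨_, _, h⟩ := he'
        simp only [List.cons.injEq] at h
        exact (List.append_inj h.2 ((length_of_mem_labellings hy).trans
          (length_of_mem_labellings hx).symm)).1.symm
    · intro x _ y _ e he he'
      simp only [List.mem_flatMap, List.mem_map] at he he'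
      obtain ⟨_, _, _, _, rfl⟩ := he
      obtain ⟨_, _, _, _, h⟩ := he'
      simp only [List.cons.injEq] at h
      exact h.1.symm

theorem length_labellings (t : PlaneForest) (lo s : ℕ) :
    (labellings t lo (lo + s)).length = t.orderPoly s := by
  induction t generalizing lo s with
  | nil => simp [labellings, orderPoly]
  | node a r iha ihr =>
    rw [labellings, orderPoly, List.length_flatMap, List.sum_map_range', Finset.sum_mul,
      ← Finset.sum_range_reflect, show lo + s + 1 - lo = s + 1 by omega]
    refine Finset.sum_congr rfl fun i hi => ?_
    rw [mem_range] at hi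
    simp only [List.length_flatMap, List.length_map, List.map_const', List.sum_replicate,
      smul_eq_mul, ihr]
    congr 1
    rw [← iha (lo + (s + 1 - 1 - i)) i, show lo + (s + 1 - 1 - i) + i = lo + s by omega]

theorem upSteps_node {a r : PlaneForest} {p q : ℕ} {h : ℕ → ℤ} (hs : Shape (node a r) p h)
    (hq : q = p + 1 + 2 * a.size) :
    upSteps h p (2 * (node a r).size) =
      p :: (upSteps h (p + 1) (2 * a.size) ++ upSteps h (q + 1) (2 * r.size)) := by
  obtain ⟨h1, h2, h3, h4⟩ := hs
  have hae := h2.end_eq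
  rw [← hq] at h3 hae
  rw [size, show 2 * (a.size + 1 + r.size) = 2 * a.size + (2 * r.size + 1) + 1 by ring,
    upSteps, List.range'_succ, ← List.range'_append_1, List.range'_succ, ← hq,
    List.filter_cons_of_pos (by simp [h1]), List.filter_append,
    List.filter_cons_of_neg (by simp [h3, hae, h1])]
  rfl

theorem length_upSteps {t : PlaneForest} {p : ℕ} {h : ℕ → ℤ} (hs : Shape t p h) :
    (upSteps h p (2 * t.size)).length = t.size := by
  induction t generalizing p with
  | nil => rfl
  | node a r iha ihr =>
    rw [upSteps_node hs rfl, List.length_cons, List.length_append, iha hs.2.1, ihr hs.2.2.2, size]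
    ring

theorem map_upSteps_mem_labellings {t : PlaneForest} {p lo m : ℕ} {h : ℕ → ℤ} {F : ℕ → ℕ}
    (hs : Shape t p h) :
    (upSteps h p (2 * t.size)).map F ∈ labellings t lo m ↔
      (∀ x, p ≤ x → x < p + 2 * t.size → h x < h (x + 1) → lo ≤ F x ∧ F x ≤ m) ∧
      ∀ s e, IsMatch h s e → p ≤ s → e < p + 2 * t.size →
        ∀ y, s < y → y < e → h y < h (y + 1) → F s ≤ F y := by
  induction t generalizing p lo with
  | nil =>
    simp only [size, labellings, upSteps]
    refine ⟨fun _ => ⟨?_, ?_⟩, fun _ => by simp⟩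
    · intros; omega
    · rintro s t ⟨hst, -⟩; intros; omega
  | node a r iha ihr =>
    have hroot := hs.isMatch_root
    have hcases := fun {s t} => hs.isMatch_cases (s := s) (t := t)
    obtain ⟨q, hq⟩ : ∃ q, q = p + 1 + 2 * a.size := ⟨_, rfl⟩
    have hend : p + 2 * (node a r).size = q + 1 + 2 * r.size := by rw [hq, size]; ring
    rw [upSteps_node hs hq, hend]
    obtain ⟨h1, h2, h3, h4⟩ := hs
    have hae := h2.end_eq
    rw [← hq] at hroot hcases h3 h4 hae
    specialize iha (lo := F p) h2
    specialize ihr (lo := lo) h4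
    rw [← hq] at iha
    have hlen := length_upSteps h2
    have hnode : (p :: (upSteps h (p + 1) (2 * a.size) ++ upSteps h (q + 1) (2 * r.size))).map F ∈
        labellings (node a r) lo m ↔ (lo ≤ F p ∧ F p ≤ m) ∧
        (upSteps h (p + 1) (2 * a.size)).map F ∈ labellings a (F p) m ∧
        (upSteps h (q + 1) (2 * r.size)).map F ∈ labellings r lo m := by
      rw [mem_labellings_node, List.map_cons, List.map_append]
      constructor
      · rintro ⟨v, hv, La, ha, Lr, hr, he⟩
        simp only [List.cons.injEq] at he
        obtain ⟨rfl, he⟩ := he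
        obtain ⟨rfl, rfl⟩ := List.append_inj he
          ((length_of_mem_labellings ha).trans (by rw [List.length_map, hlen]))
        rw [List.mem_range'_1] at hv
        exact ⟨by omega, ha, hr⟩
      · rintro ⟨hv, ha, hr⟩
        exact ⟨F p, by rw [List.mem_range'_1]; omega, _, ha, _, hr, rfl⟩
    rw [hnode, iha, ihr]
    constructor
    · rintro ⟨k1, ⟨k2, k3⟩, k4, k5⟩
      constructor
      · intro x hx hx' hu
        rcases lt_trichotomy x q with hc | rfl | hc
        · rcases eq_or_lt_of_le hx with rfl | hx
          · exact k1
          · have := k2 x hx hc hu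
            omega
        · omega
        · exact k4 x hc hx' hu
      · intro s e hm hps htq y hy hy' hu
        rcases hcases hm hps with ⟨rfl, rfl⟩ | ⟨hx, hx'⟩ | hx
        · exact (k2 y hy hy' hu).1
        · exact k3 s e hm hx hx' y hy hy' hu
        · exact k5 s e hm hx htq y hy hy' hu
    · rintro ⟨k1, k2⟩
      refine ⟨k1 p le_rfl (by omega) (by omega), ⟨?_, ?_⟩, ?_, ?_⟩
      · intro x hx hx' hu
        exact ⟨k2 p q hroot le_rfl (by omega) x hx hx' hu, (k1 x (by omega) (by omega) hu).2⟩
      · exact fun s e hm hs he => k2 s e hm (by omega) (by omega)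
      · exact fun x hx hx' => k1 x (by omega) (by omega)
      · exact fun s e hm hs he => k2 s e hm (by omega) (by omega)

end PlaneForest

/-- The number of order-preserving labellings of the up steps of a path by `{0, …, m}`. -/
theorem card_eq_orderPoly {n : ℕ} {t : PlaneForest} {h : ℕ → ℤ} (ht : t.size = n)
    (hs : PlaneForest.Shape t 0 h) (u : Fin n → ℕ) (hu : List.ofFn u = upSteps h 0 (2 * n))
    (m : ℕ) (N : Finset (Fin n → ℕ))
    (hN : ∀ f, f ∈ N ↔ (∀ i, f i ≤ m) ∧
      ∀ i j, (∃ e < 2 * n, IsMatch h (u i) e ∧ u i < u j ∧ u j < e) → f i ≤ f j) :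
    N.card = t.orderPoly m := by
  have hsorted := upSteps_sorted h 0 (2 * n)
  rw [← hu, List.pairwise_ofFn] at hsorted
  have hinj : Function.Injective u := by
    intro i j hij
    rcases lt_trichotomy i j with hc | hc | hc
    · have := hsorted hc; omega
    · exact hc
    · have := hsorted hc; omega
  have hmem : ∀ x, x ∈ upSteps h 0 (2 * n) ↔ ∃ i, u i = x := by
    intro x
    rw [← hu, List.mem_ofFn']
    rfl
  have key : ∀ f : Fin n → ℕ, f ∈ N ↔ List.ofFn f ∈ PlaneForest.labellings t 0 m := by
    intro f
    set F : ℕ → ℕ := Function.extend u f 0 with hF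
    have hFu : ∀ i, F (u i) = f i := fun i => hinj.extend_apply _ _ _
    have hlist : List.ofFn f = (upSteps h 0 (2 * t.size)).map F := by
      rw [ht, ← hu, List.map_ofFn]
      congr 1
      funext i
      exact (hFu i).symm
    rw [hlist, PlaneForest.map_upSteps_mem_labellings hs, hN, ht]
    constructor
    · rintro ⟨h1, h2⟩
      constructor
      · intro x _ hx hux
        obtain ⟨i, rfl⟩ := (hmem x).mp (mem_upSteps.mpr ⟨⟨Nat.zero_le _, hx⟩, hux⟩)
        rw [hFu]
        exact ⟨Nat.zero_le _, h1 i⟩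
      · intro s e hm _ he y hy hy' huy
        obtain ⟨j, rfl⟩ := (hmem y).mp (mem_upSteps.mpr ⟨⟨Nat.zero_le _, by omega⟩, huy⟩)
        obtain ⟨i, rfl⟩ := (hmem s).mp (mem_upSteps.mpr ⟨⟨Nat.zero_le _, by omega⟩,
          hm.2.2 _ (Nat.lt_succ_self s) (by have := hm.1; omega)⟩)
        rw [hFu, hFu]
        exact h2 i j ⟨e, by omega, hm, hy, hy'⟩
    · rintro ⟨h1, h2⟩
      have hup : ∀ i, (0 ≤ u i ∧ u i < 0 + 2 * n) ∧ h (u i) < h (u i + 1) := fun i =>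
        mem_upSteps.mp ((hmem _).mpr ⟨i, rfl⟩)
      constructor
      · intro i
        rw [← hFu]
        exact (h1 (u i) (hup i).1.1 (hup i).1.2 (hup i).2).2
      · rintro i j ⟨e, he, hm, hij, hje⟩
        rw [← hFu, ← hFu]
        exact h2 _ e hm (Nat.zero_le _) (by omega) _ hij hje (hup j).2
  have hofFn : Function.Injective (List.ofFn (n := n) (α := ℕ)) := List.ofFn_injective
  rw [← PlaneForest.length_labellings t 0 m, zero_add,
    ← List.toFinset_card_of_nodup (PlaneForest.nodup_labellings t 0 m),
    ← Finset.card_image_of_injective N hofFn]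
  congr 1
  ext L
  rw [Finset.mem_image, List.mem_toFinset]
  constructor
  · rintro ⟨f, hf, rfl⟩
    exact (key f).mp hf
  · intro hL
    have hlen := (PlaneForest.length_of_mem_labellings hL).trans ht
    subst hlen
    exact ⟨L.get, (key _).mpr (by rw [List.ofFn_get]; exact hL), List.ofFn_get L⟩

namespace DyckPath

variable {n : ℕ} (P : DyckPath n)

theorem pt_eq_sum (k : ℕ) : P.pt k =
    ∑ i : Fin (2 * n), if (i : ℕ) < k then (if P.step i = true then (1 : ℤ) else -1) else 0 := by
  unfold pt ht
  rw [Finset.card_filter, Finset.card_filter]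
  push_cast
  rw [← Finset.sum_sub_distrib]
  refine Finset.sum_congr rfl fun i _ => ?_
  simp only [sub_add_cancel, Nat.cast_lt]
  by_cases h1 : (i : ℕ) < k <;> cases h2 : P.step i <;> simp [h1]

theorem pt_succ {k : ℕ} (hk : k < 2 * n) :
    P.pt (k + 1) = P.pt k + if P.step ⟨k, hk⟩ = true then 1 else -1 := by
  rw [← sub_eq_iff_eq_add', pt_eq_sum, pt_eq_sum, ← Finset.sum_sub_distrib,
    Finset.sum_eq_single ⟨k, hk⟩]
  · simp
  · intro i _ hi
    have hik : (i : ℕ) ≠ k := fun h => hi (Fin.ext h)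
    by_cases h : (i : ℕ) < k
    · simp [h, Nat.lt_succ_of_lt h]
    · simp [h, show ¬ (i : ℕ) < k + 1 by omega]
  · simp

theorem pt_succ_of_true {k : ℕ} (hk : k < 2 * n) (h : P.step ⟨k, hk⟩ = true) :
    P.pt (k + 1) = P.pt k + 1 := by rw [P.pt_succ hk, if_pos h]

theorem pt_succ_of_false {k : ℕ} (hk : k < 2 * n) (h : P.step ⟨k, hk⟩ = false) :
    P.pt (k + 1) = P.pt k - 1 := by rw [P.pt_succ hk, if_neg (by simp [h])]; ring

theorem step_eq_true_iff {k : ℕ} (hk : k < 2 * n) :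
    P.step ⟨k, hk⟩ = true ↔ P.pt k < P.pt (k + 1) := by
  cases h : P.step ⟨k, hk⟩
  · have := P.pt_succ_of_false hk h
    simp only [Bool.false_eq_true, false_iff]
    omega
  · have := P.pt_succ_of_true hk h
    simp only [true_iff]
    omega

theorem pt_step (k : ℕ) (hk : k < 2 * n) :
    P.pt (k + 1) = P.pt k + 1 ∨ P.pt (k + 1) = P.pt k - 1 := by
  cases h : P.step ⟨k, hk⟩
  · exact Or.inr (P.pt_succ_of_false hk h)
  · exact Or.inl (P.pt_succ_of_true hk h)

theorem pt_zero : P.pt 0 = 0 := by simp [pt_eq_sum]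

theorem pt_nonneg {k : ℕ} (hk : k ≤ 2 * n) : 0 ≤ P.pt k := by
  have := P.nonneg k hk
  unfold pt ht
  simp only [sub_add_cancel, Nat.cast_lt]
  omega

theorem card_step_false : (Finset.univ.filter fun i => P.step i = false).card = n := by
  have h1 := Finset.card_filter_add_card_filter_not (s := Finset.univ) fun i => P.step i = true
  simp only [Bool.not_eq_true, P.balanced, Finset.card_univ, Fintype.card_fin] at h1
  omega

theorem ht_eq_zero_of_le {x : ℤ} (hx : x ≤ -n) : P.ht x = 0 := by
  unfold ht
  rw [Finset.filter_false_of_mem, Finset.filter_false_of_mem]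
  · simp
  · intro i _; omega
  · intro i _; omega

theorem ht_eq_zero_of_ge {x : ℤ} (hx : n ≤ x) : P.ht x = 0 := by
  unfold ht
  have h : ∀ i : Fin (2 * n), ((i : ℕ) : ℤ) < x + n := fun i => by
    have := i.isLt
    omega
  simp only [h, true_and]
  rw [P.balanced, P.card_step_false, sub_self]

theorem pt_of_ge {k : ℕ} (hk : 2 * n ≤ k) : P.pt k = 0 := P.ht_eq_zero_of_ge (by omega)

theorem exists_isMatch {s : ℕ} (hs : s < 2 * n) (hup : P.pt s < P.pt (s + 1)) :
    ∃ e < 2 * n, IsMatch P.pt s e := by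
  classical
  have hex : ∃ q, s < q ∧ P.pt q ≤ P.pt s :=
    ⟨2 * n, hs, by rw [P.pt_of_ge le_rfl]; exact P.pt_nonneg hs.le⟩
  obtain ⟨h1, h2⟩ := Nat.find_spec hex
  have h3 : ∀ y, s < y → y < Nat.find hex → P.pt s < P.pt y := fun y hy hy' => by
    have := Nat.find_min hex hy'
    push Not at this
    exact this hy
  have h4 : Nat.find hex ≤ 2 * n :=
    Nat.find_min' hex ⟨hs, by rw [P.pt_of_ge le_rfl]; exact P.pt_nonneg hs.le⟩
  obtain ⟨e, he⟩ : ∃ e, Nat.find hex = e + 1 := ⟨Nat.find hex - 1, by omega⟩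
  rw [he] at h1 h2 h3 h4
  have hse : s < e := by
    rcases eq_or_lt_of_le (Nat.lt_succ_iff.mp h1) with rfl | h
    · omega
    · exact h
  have h5 := h3 e hse (Nat.lt_succ_self e)
  have h6 := P.pt_step e (by omega)
  exact ⟨e, h4, hse, by omega, fun y hy hy' => h3 y hy (by omega)⟩

theorem isChord_iff {p q : ℕ} : IsChord P p q ↔ q < 2 * n ∧ IsMatch P.pt p q := by
  constructor
  · rintro ⟨h1, h2, -, -, h3, h4⟩
    exact ⟨h2, h1, h3, h4⟩
  · rintro ⟨h2, h1, h3, h4⟩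
    refine ⟨h1, h2, ⟨by omega, ?_⟩, ⟨h2, ?_⟩, h3, h4⟩
    · rw [step_eq_true_iff]
      exact h4 _ (Nat.lt_succ_self p) h1
    · rw [← Bool.not_eq_true, step_eq_true_iff, h3]
      have := h4 q h1 le_rfl
      omega

end DyckPath

theorem IsMatch.unique {h : ℕ → ℤ} {s e e' : ℕ} (hm : IsMatch h s e) (hm' : IsMatch h s e') :
    e = e' := by
  obtain ⟨h1, h2, h3⟩ := hm
  obtain ⟨h1', h2', h3'⟩ := hm'
  rcases lt_trichotomy e e' with hc | hc | hc
  · have := h3' (e + 1) (by omega) hc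
    omega
  · exact hc
  · have := h3 (e' + 1) (by omega) hc
    omega

theorem IsMatch.nested {h : ℕ → ℤ} {s e s' e' : ℕ} (hm : IsMatch h s e) (hm' : IsMatch h s' e')
    (hs : s < s') (hs' : s' < e) : e' < e := by
  obtain ⟨h1, h2, h3⟩ := hm
  obtain ⟨h1', h2', h3'⟩ := hm'
  have h4 := h3 s' hs hs'.le
  by_contra hc
  rcases eq_or_lt_of_le (not_lt.mp hc) with rfl | hc
  · omega
  · have := h3' (e + 1) (by omega) hc
    omega

theorem linExt_iff {n : ℕ} (P : DyckPath n) (u : Fin n → ℕ) (hu : StrictMono u)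
    (hmem : ∀ x, (∃ i, u i = x) ↔ x < 2 * n ∧ P.pt x < P.pt (x + 1)) (σ : Equiv.Perm (Fin n)) :
    LinExt P σ ↔ ∀ i j, (∃ e < 2 * n, IsMatch P.pt (u i) e ∧ u i < u j ∧ u j < e) →
      σ.symm i < σ.symm j := by
  constructor
  · rintro ⟨C, hC⟩ i j ⟨e, he, hm, hij, hje⟩
    have hch := fun k => P.isChord_iff.mp (C.chord k)
    have hg : ∀ k, ∃ k', u k' = C.l (σ.symm k) := fun k => by
      rw [hmem]
      obtain ⟨h1, h2, -, h3⟩ := hch (σ.symm k)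
      exact ⟨by omega, h3 _ (Nat.lt_succ_self _) h2⟩
    choose g hg using hg
    have hmono : StrictMono g := by
      intro a b hab
      rw [← hu.lt_iff_lt, hg, hg, ← hC, Equiv.apply_symm_apply, Equiv.apply_symm_apply]
      exact hab
    have hid : g = id := by
      refine (hmono.range_inj strictMono_id).mp ?_
      rw [Set.range_id, (Finite.injective_iff_surjective.mp hmono.injective).range_eq]
    rw [hid] at hg
    simp only [id] at hg
    rw [hg, hg] at hij
    refine C.natural _ _ hij ?_
    have hmi := (hch (σ.symm i)).2
    have hmj := (hch (σ.symm j)).2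
    rw [← hg] at hmi hmj
    rw [hmi.unique hm]
    rw [← hg, ← hg] at hij
    exact hm.nested hmj hij hje
  · intro hσ
    have hch : ∀ i, ∃ e < 2 * n, IsMatch P.pt (u i) e := fun i =>
      P.exists_isMatch ((hmem _).mp ⟨i, rfl⟩).1 ((hmem _).mp ⟨i, rfl⟩).2
    choose e he hm using hch
    refine ⟨⟨fun i => u (σ i), fun i => e (σ i), fun i => P.isChord_iff.mpr ⟨he _, hm _⟩,
      hu.injective.comp σ.injective, fun i j hij hr => ?_⟩, fun i j => hu.lt_iff_lt.symm⟩
    have := hσ (σ j) (σ i) ⟨e (σ j), he _, hm _, hij, (hm (σ i)).1.trans hr⟩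
    simpa using this

theorem sum_X_pow_permDes_linExt {n : ℕ} (P : DyckPath n) (t : PlaneForest) (ht : t.size = n)
    (hs : t.Shape 0 P.pt) (S : Finset (Equiv.Perm (Fin n))) (hS : ∀ σ, σ ∈ S ↔ LinExt P σ) :
    ∑ σ ∈ S, (PowerSeries.X : PowerSeries ℤ) ^ permDes σ =
      (1 - PowerSeries.X) ^ (n + 1) * PowerSeries.mk fun m => (t.orderPoly m : ℤ) := by
  classical
  have hlen : (upSteps P.pt 0 (2 * n)).length = n := by
    have := PlaneForest.length_upSteps hs
    rwa [ht] at this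
  obtain ⟨u, hu⟩ : ∃ u : Fin n → ℕ, List.ofFn u = upSteps P.pt 0 (2 * n) :=
    ⟨fun i => (upSteps P.pt 0 (2 * n)).get (Fin.cast hlen.symm i), by
      conv_rhs => rw [← List.ofFn_get (upSteps P.pt 0 (2 * n))]
      rw [List.ofFn_congr hlen]⟩
  have hsorted := upSteps_sorted P.pt 0 (2 * n)
  rw [← hu, List.pairwise_ofFn] at hsorted
  have hmono : StrictMono u := fun i j hij => hsorted hij
  have hmem : ∀ x, (∃ i, u i = x) ↔ x < 2 * n ∧ P.pt x < P.pt (x + 1) := by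
    intro x
    have h1 : (∃ i, u i = x) ↔ x ∈ upSteps P.pt 0 (2 * n) := by
      rw [← hu, List.mem_ofFn']
      rfl
    rw [h1, mem_upSteps]
    simp
  have key := sum_X_pow_permDes
    (fun i j => ∃ e < 2 * n, IsMatch P.pt (u i) e ∧ u i < u j ∧ u j < e)
    (fun i j ⟨_, _, _, h, _⟩ => hmono.lt_iff_lt.mp h) S
    (fun σ => (hS σ).trans (linExt_iff P u hmono hmem σ))
    (fun m => (Fintype.piFinset fun _ => range (m + 1)).filter fun f => ∀ i j,
      (∃ e < 2 * n, IsMatch P.pt (u i) e ∧ u i < u j ∧ u j < e) → f i ≤ f j)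
    (fun m f => by simp [Fintype.mem_piFinset])
  rw [key]
  congr 2
  funext m
  congr 1
  refine card_eq_orderPoly ht hs u hu m _ fun f => ?_
  simp [Fintype.mem_piFinset]

namespace DyckPath

variable {n : ℕ} (P : DyckPath n)

theorem eq_of_pt_eq {P Q : DyckPath n} (h : ∀ k ≤ 2 * n, P.pt k = Q.pt k) : P = Q := by
  have hstep : P.step = Q.step := by
    funext ⟨i, hi⟩
    rw [Bool.eq_iff_iff, step_eq_true_iff, step_eq_true_iff, h i hi.le, h (i + 1) hi]
  cases P
  cases Q
  simpa using hstep

theorem pt_emod_two {k : ℕ} (hk : k ≤ 2 * n) : (P.pt k - k) % 2 = 0 := by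
  induction k with
  | zero => simp [P.pt_zero]
  | succ k ih =>
    have h1 := ih (by omega)
    have h2 := P.pt_step k (by omega)
    push_cast
    omega

theorem pt_le {k : ℕ} (hk : k ≤ 2 * n) : P.pt k ≤ n := by
  have h1 : ∀ k ≤ 2 * n, P.pt k ≤ k := by
    intro k
    induction k with
    | zero => simp [P.pt_zero]
    | succ k ih =>
      intro hk
      have h1 := ih (by omega)
      have h2 := P.pt_step k (by omega)
      push_cast
      omega
  have h2 : ∀ j ≤ 2 * n, P.pt (2 * n - j) ≤ j := by
    intro j
    induction j with
    | zero => simp [P.pt_of_ge]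
    | succ j ih =>
      intro hj
      have h1 := ih (by omega)
      have h2 := P.pt_step (2 * n - (j + 1)) (by omega)
      rw [show 2 * n - (j + 1) + 1 = 2 * n - j by omega] at h2
      push_cast
      omega
  have h3 := h1 k hk
  have h4 := h2 (2 * n - k) (by omega)
  rw [show 2 * n - (2 * n - k) = k by omega] at h4
  omega

theorem exists_isMatch_down {e : ℕ} (he : e < 2 * n) (hdown : P.pt (e + 1) < P.pt e) :
    ∃ s, IsMatch P.pt s e := by
  have h0 : P.pt 0 ≤ P.pt (e + 1) := by rw [P.pt_zero]; exact P.pt_nonneg he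
  obtain ⟨s, hs⟩ : ∃ s, s = Nat.findGreatest (fun s => P.pt s ≤ P.pt (e + 1)) e := ⟨_, rfl⟩
  have h1 : P.pt s ≤ P.pt (e + 1) := by
    rw [hs]
    exact Nat.findGreatest_spec (P := fun s => P.pt s ≤ P.pt (e + 1)) (Nat.zero_le e) h0
  have h2 : s ≤ e := by rw [hs]; exact Nat.findGreatest_le e
  have h3 : ∀ y, s < y → y ≤ e → P.pt (e + 1) < P.pt y := by
    intro y hy hy'
    rw [hs] at hy
    exact not_le.mp (Nat.findGreatest_is_greatest hy hy')
  have h4 : s < e := by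
    rcases eq_or_lt_of_le h2 with rfl | h
    · omega
    · exact h
  have h5 := P.pt_step s (by omega)
  have h6 := h3 (s + 1) (by omega) h4
  have h7 : P.pt s = P.pt (e + 1) := by omega
  exact ⟨s, h4, h7.symm, fun y hy hy' => h7 ▸ h3 y hy hy'⟩

theorem exists_pt_eq (g : ℕ → ℤ) (h0 : g 0 = 0) (hend : g (2 * n) = 0)
    (hnonneg : ∀ k ≤ 2 * n, 0 ≤ g k)
    (hstep : ∀ k < 2 * n, g (k + 1) = g k + 1 ∨ g (k + 1) = g k - 1) :
    ∃ Q : DyckPath n, ∀ k ≤ 2 * n, Q.pt k = g k := by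
  let step : Fin (2 * n) → Bool := fun i => decide (g i < g (i + 1))
  have hcount : ∀ k ≤ 2 * n,
      ((univ.filter fun i : Fin (2 * n) => (i : ℕ) < k ∧ step i = true).card : ℤ) -
        ((univ.filter fun i : Fin (2 * n) => (i : ℕ) < k ∧ step i = false).card : ℤ) = g k := by
    intro k hk
    have hsum : ∀ k ≤ 2 * n, (∑ i : Fin (2 * n),
        if (i : ℕ) < k then g ((i : ℕ) + 1) - g i else 0) = g k := by
      intro k hk
      rw [Fin.sum_univ_eq_sum_range (fun i => if i < k then g (i + 1) - g i else 0),
        ← Finset.sum_filter, show (range (2 * n)).filter (· < k) = range k by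
          ext; simp; omega, Finset.sum_range_sub, h0, sub_zero]
    rw [← hsum k hk, Finset.card_filter, Finset.card_filter]
    push_cast
    rw [← Finset.sum_sub_distrib]
    refine Finset.sum_congr rfl fun i _ => ?_
    have := hstep i i.isLt
    by_cases h1 : (i : ℕ) < k <;> by_cases h2 : g i < g (i + 1) <;> simp [h1, h2, step] <;> omega
  have hpart := Finset.card_filter_add_card_filter_not (s := Finset.univ) fun i => step i = true
  simp only [Bool.not_eq_true, Finset.card_univ, Fintype.card_fin] at hpart
  have htot := hcount (2 * n) le_rfl
  simp only [Fin.is_lt, true_and, hend] at htot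
  refine ⟨⟨step, by omega, fun k hk => ?_⟩, fun k hk => ?_⟩
  · have := hcount k hk
    have := hnonneg k hk
    omega
  · unfold pt ht
    simp only [sub_add_cancel, Nat.cast_lt]
    exact hcount k hk

/-- The cell of level `k` above the lattice point number `p` of the path. -/
def cell (p k : ℕ) : ℤ × ℤ := ((p : ℤ) - n, P.pt p + 2 * k)

theorem cell_inj {p k p' k' : ℕ} : P.cell p k = P.cell p' k' ↔ p = p' ∧ k = k' := by
  unfold cell
  constructor
  · intro h
    rw [Prod.mk.injEq] at h
    obtain rfl : p = p' := by omega
    exact ⟨rfl, by omega⟩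
  · rintro ⟨rfl, rfl⟩; rfl

end DyckPath

/-- Half the distance between two paths. -/
def halfGap {n : ℕ} (P Q : DyckPath n) (p : ℕ) : ℕ := ((Q.pt p - P.pt p) / 2).toNat

section Gap

variable {n : ℕ} {P Q : DyckPath n}

theorem pt_eq_add_halfGap {p : ℕ} (hp : p ≤ 2 * n) (h : P.pt p ≤ Q.pt p) :
    Q.pt p = P.pt p + 2 * halfGap P Q p := by
  have h1 := P.pt_emod_two hp
  have h2 := Q.pt_emod_two hp
  unfold halfGap
  omega

theorem mem_skewCells_iff (hle : ∀ p ≤ 2 * n, P.pt p ≤ Q.pt p) (x : ℤ × ℤ) :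
    x ∈ skewCells P Q ↔ ∃ p ≤ 2 * n, ∃ k < halfGap P Q p, x = P.cell p k := by
  obtain ⟨x, z⟩ := x
  unfold skewCells
  simp only [mem_filter, mem_product, mem_Icc, DyckPath.cell, Prod.mk.injEq]
  constructor
  · rintro ⟨⟨⟨h1, h2⟩, h3, h4⟩, h5, h6, h7⟩
    obtain ⟨p, hp⟩ : ∃ p : ℕ, x = (p : ℤ) - n := ⟨(x + n).toNat, by omega⟩
    subst hp
    have hp : p ≤ 2 * n := by omega
    change P.pt p ≤ z at h5
    change z + 2 ≤ Q.pt p at h6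
    have h8 := P.pt_emod_two hp
    have h9 := pt_eq_add_halfGap hp (hle p hp)
    exact ⟨p, hp, ((z - P.pt p) / 2).toNat, by omega, rfl, by omega⟩
  · rintro ⟨p, hp, k, hk, rfl, rfl⟩
    have h8 := P.pt_emod_two hp
    have h9 := pt_eq_add_halfGap hp (hle p hp)
    have h10 := Q.pt_le hp
    have h11 := P.pt_nonneg hp
    change _ ∧ P.pt p ≤ _ ∧ _ ≤ Q.pt p ∧ _
    omega

theorem cell_mem_skewCells_iff (hle : ∀ p ≤ 2 * n, P.pt p ≤ Q.pt p) {p k : ℕ} :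
    P.cell p k ∈ skewCells P Q ↔ p ≤ 2 * n ∧ k < halfGap P Q p := by
  rw [mem_skewCells_iff hle]
  constructor
  · rintro ⟨p', hp, k', hk, h⟩
    obtain ⟨rfl, rfl⟩ := P.cell_inj.mp h
    exact ⟨hp, hk⟩
  · rintro ⟨hp, hk⟩
    exact ⟨p, hp, k, hk, rfl⟩

theorem halfGap_up (hle : ∀ p ≤ 2 * n, P.pt p ≤ Q.pt p) {x : ℕ} (hx : x < 2 * n)
    (h : P.pt (x + 1) = P.pt x + 1) :
    halfGap P Q x = halfGap P Q (x + 1) ∨ halfGap P Q x = halfGap P Q (x + 1) + 1 := by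
  have h1 := pt_eq_add_halfGap hx.le (hle x hx.le)
  have h2 := pt_eq_add_halfGap (p := x + 1) hx (hle (x + 1) hx)
  have h3 := Q.pt_step x hx
  omega

theorem halfGap_down (hle : ∀ p ≤ 2 * n, P.pt p ≤ Q.pt p) {x : ℕ} (hx : x < 2 * n)
    (h : P.pt (x + 1) = P.pt x - 1) :
    halfGap P Q (x + 1) = halfGap P Q x ∨ halfGap P Q (x + 1) = halfGap P Q x + 1 := by
  have h1 := pt_eq_add_halfGap hx.le (hle x hx.le)
  have h2 := pt_eq_add_halfGap (p := x + 1) hx (hle (x + 1) hx)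
  have h3 := Q.pt_step x hx
  omega

theorem halfGap_zero : halfGap P Q 0 = 0 := by simp [halfGap, DyckPath.pt_zero]

theorem halfGap_last : halfGap P Q (2 * n) = 0 := by simp [halfGap, DyckPath.pt_of_ge]

end Gap

namespace DyckTiling

variable {n : ℕ} (T : DyckTiling n)

theorem pt_le_pt (p : ℕ) : T.lower.pt p ≤ T.upper.pt p := T.below _

theorem dis_eq_sum : T.dis = ∑ k ∈ range (2 * n),
    (halfGap T.lower T.upper k - halfGap T.lower T.upper (k + 1)) := by
  set c := halfGap T.lower T.upper with hc
  have hle : ∀ p ≤ 2 * n, T.lower.pt p ≤ T.upper.pt p := fun p _ => T.pt_le_pt p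
  have h1 : T.dis = ∑ k ∈ range (2 * n), (c (k + 1) - c k) := by
    rw [dis, Finset.card_filter, ← Fin.sum_univ_eq_sum_range (fun k => c (k + 1) - c k)]
    refine Finset.sum_congr rfl fun ⟨i, hi⟩ _ => ?_
    have h1 := pt_eq_add_halfGap hi.le (hle i hi.le)
    have h2 := pt_eq_add_halfGap (p := i + 1) hi (hle (i + 1) hi)
    rw [← hc] at h1 h2
    dsimp only
    cases h3 : T.lower.step ⟨i, hi⟩ <;> cases h4 : T.upper.step ⟨i, hi⟩ <;>
      first
      | have h5 := T.lower.pt_succ_of_false hi h3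
      | have h5 := T.lower.pt_succ_of_true hi h3
    all_goals
      first
      | have h6 := T.upper.pt_succ_of_false hi h4
      | have h6 := T.upper.pt_succ_of_true hi h4
    all_goals simp; omega
  have h2 : ∑ k ∈ range (2 * n), ((c (k + 1) : ℤ) - c k) = 0 := by
    rw [Finset.sum_range_sub (fun k => (c k : ℤ)), hc, halfGap_zero, halfGap_last, sub_self]
  have h3 : ∑ k ∈ range (2 * n), ((c (k + 1) : ℤ) - c k) =
      ((∑ k ∈ range (2 * n), (c (k + 1) - c k) : ℕ) : ℤ) -
        ((∑ k ∈ range (2 * n), (c k - c (k + 1)) : ℕ) : ℤ) := by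
    rw [Nat.cast_sum, Nat.cast_sum, ← Finset.sum_sub_distrib]
    exact Finset.sum_congr rfl fun k _ => by omega
  omega

end DyckTiling

namespace DyckTiling

variable {n : ℕ} {T : DyckTiling n} {t u : Finset (ℤ × ℤ)}

theorem exists_cell_of_mem (ht : t ∈ T.tiles) {x : ℤ × ℤ} (hx : x ∈ t) :
    ∃ p ≤ 2 * n, ∃ k < halfGap T.lower T.upper p, x = T.lower.cell p k := by
  rw [← mem_skewCells_iff fun p _ => T.pt_le_pt p, ← T.cover, mem_biUnion]
  exact ⟨t, ht, hx⟩

theorem lt_halfGap_of_mem (ht : t ∈ T.tiles) {p k : ℕ} (h : T.lower.cell p k ∈ t) :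
    p ≤ 2 * n ∧ k < halfGap T.lower T.upper p := by
  rw [← cell_mem_skewCells_iff fun p _ => T.pt_le_pt p, ← T.cover, mem_biUnion]
  exact ⟨t, ht, h⟩

theorem exists_tile {p k : ℕ} (hp : p ≤ 2 * n) (hk : k < halfGap T.lower T.upper p) :
    ∃ t ∈ T.tiles, T.lower.cell p k ∈ t := by
  have h := (cell_mem_skewCells_iff fun p _ => T.pt_le_pt p).mpr ⟨hp, hk⟩
  rw [← T.cover, mem_biUnion] at h
  exact h

theorem tile_unique (ht : t ∈ T.tiles) (hu : u ∈ T.tiles) {x : ℤ × ℤ} (hxt : x ∈ t)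
    (hxu : x ∈ u) : t = u := by
  by_contra hne
  exact Finset.disjoint_left.mp (T.disj t ht u hu hne) hxt hxu

theorem level_unique (ht : t ∈ T.tiles) {p k l : ℕ} (h1 : T.lower.cell p k ∈ t)
    (h2 : T.lower.cell p l ∈ t) : k = l := by
  obtain ⟨a, b, f, -, -, -, -, rfl⟩ := T.isDyck t ht
  simp only [mem_image, DyckPath.cell, Prod.mk.injEq] at h1 h2
  obtain ⟨x, -, hx, h1⟩ := h1
  obtain ⟨y, -, hy, h2⟩ := h2
  rw [hx] at h1
  rw [hy, h1] at h2
  omega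

theorem exists_cell_between (ht : t ∈ T.tiles) {p q r k l : ℕ} (h1 : T.lower.cell p k ∈ t)
    (h2 : T.lower.cell q l ∈ t) (hpr : p ≤ r) (hrq : r ≤ q) : ∃ m, T.lower.cell r m ∈ t := by
  have hsub := fun x hx => exists_cell_of_mem (x := x) ht hx
  obtain ⟨a, b, f, -, -, -, -, rfl⟩ := T.isDyck t ht
  simp only [mem_image, mem_Icc, DyckPath.cell, Prod.mk.injEq] at h1 h2
  obtain ⟨x, hx, hx', -⟩ := h1
  obtain ⟨y, hy, hy', -⟩ := h2
  have hmem : ((r : ℤ) - n, f ((r : ℤ) - n)) ∈ (Icc a b).image fun x => (x, f x) :=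
    mem_image_of_mem (fun x => (x, f x)) (by rw [mem_Icc]; omega)
  obtain ⟨p', -, m, -, he⟩ := hsub _ hmem
  obtain rfl : r = p' := by
    simp only [DyckPath.cell, Prod.mk.injEq] at he
    omega
  exact ⟨m, he ▸ hmem⟩

theorem cell_step (ht : t ∈ T.tiles) {p k l : ℕ} (h1 : T.lower.cell p k ∈ t)
    (h2 : T.lower.cell (p + 1) l ∈ t) :
    T.lower.pt (p + 1) + 2 * l = T.lower.pt p + 2 * k + 1 ∨
      T.lower.pt (p + 1) + 2 * l = T.lower.pt p + 2 * k - 1 := by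
  obtain ⟨a, b, f, -, hf, -, -, rfl⟩ := T.isDyck t ht
  simp only [mem_image, mem_Icc, DyckPath.cell, Prod.mk.injEq] at h1 h2
  obtain ⟨x, hx, hx', h1⟩ := h1
  obtain ⟨y, hy, hy', h2⟩ := h2
  obtain rfl : y = x + 1 := by push_cast at hy'; omega
  have := hf x (by omega) (by omega)
  omega

/-- In a cover-inclusive tiling, adjacent cells of a tile have the same level. -/
theorem CoverInclusive.step_level_eq (hT : T.CoverInclusive) (m : ℕ) : ∀ t ∈ T.tiles,
    ∀ p k l : ℕ, T.lower.cell p k ∈ t → T.lower.cell (p + 1) l ∈ t → min k l = m → k = l := by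
  induction m using Nat.strong_induction_on with
  | _ m ih =>
    intro t ht p k l h1 h2 hm
    have hp1 := lt_halfGap_of_mem ht h1
    have hp2 := lt_halfGap_of_mem ht h2
    have hstep := T.lower.pt_step p (by omega)
    have htstep := cell_step ht h1 h2
    by_contra hne
    rcases lt_or_gt_of_ne hne with hlt | hlt
    · obtain ⟨u, hu, hcu⟩ := exists_tile (T := T) (p := p + 1) (k := k) hp2.1 (by omega)
      obtain ⟨y, hy⟩ := hT t ht u hu ⟨_, h2, _, hcu, rfl, by
        simp only [DyckPath.cell]; omega⟩ _ h1
      obtain ⟨p', -, j, -, he⟩ := exists_cell_of_mem hu hy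
      obtain rfl : p = p' := by
        simp only [DyckPath.cell, Prod.mk.injEq] at he
        omega
      rw [he] at hy
      have hustep := cell_step hu hy hcu
      have hjk : j ≠ k := by
        rintro rfl
        rw [← tile_unique ht hu h1 hy] at hcu
        exact hne (level_unique ht hcu h2)
      exact hjk (ih (min j k) (by omega) u hu p j k hy hcu rfl)
    · obtain ⟨u, hu, hcu⟩ := exists_tile (T := T) (p := p) (k := l) hp1.1 (by omega)
      obtain ⟨y, hy⟩ := hT t ht u hu ⟨_, h1, _, hcu, rfl, by
        simp only [DyckPath.cell]; omega⟩ _ h2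
      obtain ⟨p', -, j, -, he⟩ := exists_cell_of_mem hu hy
      obtain rfl : p + 1 = p' := by
        simp only [DyckPath.cell, Prod.mk.injEq] at he
        push_cast at he
        omega
      rw [he] at hy
      have hustep := cell_step hu hcu hy
      have hjk : l ≠ j := by
        rintro rfl
        rw [← tile_unique ht hu h2 hy] at hcu
        exact hne (level_unique ht h1 hcu)
      exact hjk (ih (min l j) (by omega) u hu p l j hcu hy rfl)

theorem CoverInclusive.level_eq (hT : T.CoverInclusive) (ht : t ∈ T.tiles) {p q k l : ℕ}
    (h1 : T.lower.cell p k ∈ t) (h2 : T.lower.cell q l ∈ t) : k = l := by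
  have key : ∀ p d k l : ℕ, T.lower.cell p k ∈ t → T.lower.cell (p + d) l ∈ t → k = l := by
    intro p d
    induction d with
    | zero => exact fun k l => level_unique ht
    | succ d ih =>
      intro k l h1 h2
      obtain ⟨m, hm⟩ := exists_cell_between ht h1 h2 (r := p + d) (by omega) (by omega)
      rw [ih k m h1 hm]
      exact hT.step_level_eq _ t ht (p + d) m l hm h2 rfl
  rcases le_total p q with h | h
  · obtain ⟨d, rfl⟩ := Nat.exists_eq_add_of_le h
    exact key p d k l h1 h2
  · obtain ⟨d, rfl⟩ := Nat.exists_eq_add_of_le h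
    exact (key q d l k h2 h1).symm

theorem CoverInclusive.cell_mem_of_between (hT : T.CoverInclusive) (ht : t ∈ T.tiles)
    {p q r k l : ℕ} (h1 : T.lower.cell p k ∈ t) (h2 : T.lower.cell q l ∈ t) (hpr : p ≤ r)
    (hrq : r ≤ q) : T.lower.cell r k ∈ t := by
  obtain ⟨m, hm⟩ := exists_cell_between ht h1 h2 hpr hrq
  rwa [hT.level_eq ht h1 hm]

/-- A tile of a cover-inclusive tiling is a translate of a piece of the lower path. -/
theorem CoverInclusive.exists_ends (hT : T.CoverInclusive) (ht : t ∈ T.tiles) :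
    ∃ a e k, a ≤ e ∧ T.lower.pt e = T.lower.pt a ∧
      (∀ p, a ≤ p → p ≤ e → T.lower.pt a ≤ T.lower.pt p) ∧
      ∀ p l, T.lower.cell p l ∈ t ↔ (a ≤ p ∧ p ≤ e) ∧ l = k := by
  have hsub := fun x hx => exists_cell_of_mem (x := x) ht hx
  have hlev := fun {p q k l} => hT.level_eq (p := p) (q := q) (k := k) (l := l) ht
  obtain ⟨a, b, f, hab, -, hfab, hfle, rfl⟩ := T.isDyck t ht
  have hmem : ∀ x, a ≤ x → x ≤ b → (x, f x) ∈ (Icc a b).image fun x => (x, f x) :=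
    fun x h h' => mem_image_of_mem (fun x => (x, f x)) (by rw [mem_Icc]; omega)
  obtain ⟨a', -, k, -, ha⟩ := hsub _ (hmem a le_rfl hab)
  have hcell : ∀ x, a ≤ x → x ≤ b → ∃ p : ℕ, x = (p : ℤ) - n ∧ f x = T.lower.pt p + 2 * k := by
    intro x hx hx'
    obtain ⟨p, -, l, -, hp⟩ := hsub _ (hmem x hx hx')
    obtain rfl : k = l := hlev (ha ▸ hmem a le_rfl hab) (hp ▸ hmem x hx hx')
    rw [DyckPath.cell, Prod.mk.injEq] at hp
    exact ⟨p, hp⟩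
  have hcellp : ∀ p : ℕ, a ≤ (p : ℤ) - n → (p : ℤ) - n ≤ b →
      f ((p : ℤ) - n) = T.lower.pt p + 2 * k := by
    intro p hp hp'
    obtain ⟨p', h1, h2⟩ := hcell _ hp hp'
    obtain rfl : p = p' := by omega
    exact h2
  simp only [DyckPath.cell, Prod.mk.injEq] at ha
  obtain ⟨rfl, ha⟩ := ha
  obtain ⟨e, rfl, he⟩ := hcell b hab le_rfl
  refine ⟨a', e, k, by omega, by omega, fun p hp hp' => ?_, fun p l => ?_⟩
  · have h1 := hfle ((p : ℤ) - n) (by omega) (by omega)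
    rw [hcellp p (by omega) (by omega)] at h1
    omega
  · simp only [mem_image, mem_Icc, DyckPath.cell, Prod.mk.injEq]
    constructor
    · rintro ⟨x, hx, rfl, h⟩
      rw [hcellp p (by omega) (by omega)] at h
      omega
    · rintro ⟨hp, rfl⟩
      exact ⟨(p : ℤ) - n, by omega, rfl, hcellp p (by omega) (by omega)⟩

/-- The cells of level `k` above the points `p` and `p + 1` are in the same tile. -/
def Joined (T : DyckTiling n) (p k : ℕ) : Prop :=
  ∃ t ∈ T.tiles, T.lower.cell p k ∈ t ∧ T.lower.cell (p + 1) k ∈ t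

/-- The number of levels joined across the step `p`. -/
def joinCount (T : DyckTiling n) (p : ℕ) : ℕ := sInf {k | ¬ T.Joined p k}

theorem Joined.lt_halfGap {p k : ℕ} (h : T.Joined p k) :
    p < 2 * n ∧ k < halfGap T.lower T.upper p ∧ k < halfGap T.lower T.upper (p + 1) := by
  obtain ⟨t, ht, h1, h2⟩ := h
  have h3 := lt_halfGap_of_mem ht h1
  have h4 := lt_halfGap_of_mem ht h2
  omega

theorem CoverInclusive.joined_of_lt (hT : T.CoverInclusive) {p j k : ℕ} (h : T.Joined p k)
    (hj : j < k) : T.Joined p j := by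
  have hlt := h.lt_halfGap
  obtain ⟨t, ht, h1, h2⟩ := h
  obtain ⟨u, hu, h3⟩ := exists_tile (T := T) (p := p) (k := j) (by omega) (by omega)
  obtain ⟨y, hy⟩ := hT t ht u hu ⟨_, h1, _, h3, rfl, by simp only [DyckPath.cell]; omega⟩ _ h2
  obtain ⟨p', -, l, -, he⟩ := exists_cell_of_mem hu hy
  obtain rfl : p + 1 = p' := by
    simp only [DyckPath.cell, Prod.mk.injEq] at he
    push_cast at he
    omega
  rw [he] at hy
  obtain rfl := hT.level_eq hu h3 hy
  exact ⟨u, hu, h3, hy⟩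

theorem lt_joinCount_iff_of_downward {p k : ℕ}
    (hdown : ∀ j k, T.Joined p k → j < k → T.Joined p j) :
    k < T.joinCount p ↔ T.Joined p k := by
  constructor
  · intro h
    by_contra hc
    exact Nat.notMem_of_lt_sInf h hc
  · intro h
    have hne : {k | ¬ T.Joined p k}.Nonempty :=
      ⟨halfGap T.lower T.upper p, fun hc => (lt_irrefl _ hc.lt_halfGap.2.1)⟩
    have hmem := Nat.sInf_mem hne
    by_contra hc
    rcases eq_or_lt_of_le (not_lt.mp hc) with he | hlt
    · exact hmem (by rw [joinCount] at he; rw [he]; exact h)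
    · exact hmem (hdown _ _ h hlt)

theorem CoverInclusive.lt_joinCount_iff (hT : T.CoverInclusive) {p k : ℕ} :
    k < T.joinCount p ↔ T.Joined p k :=
  lt_joinCount_iff_of_downward fun _ _ => hT.joined_of_lt

theorem CoverInclusive.segOK (hT : T.CoverInclusive) :
    SegOK T.lower.pt (halfGap T.lower T.upper) T.joinCount 0 0 (2 * n) := by
  have hle : ∀ p ≤ 2 * n, T.lower.pt p ≤ T.upper.pt p := fun p _ => T.pt_le_pt p
  have hb : ∀ p, T.joinCount p ≤ halfGap T.lower T.upper p ∧
      T.joinCount p ≤ halfGap T.lower T.upper (p + 1) := fun p =>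
    ⟨le_of_forall_lt fun k hk => (hT.lt_joinCount_iff.mp hk).lt_halfGap.2.1,
      le_of_forall_lt fun k hk => (hT.lt_joinCount_iff.mp hk).lt_halfGap.2.2⟩
  refine ⟨fun x _ hx h => ⟨(hb x).2, halfGap_up hle hx h⟩,
    fun x _ hx h => ⟨(hb x).1, halfGap_down hle hx h⟩, ?_, fun _ _ _ => Nat.zero_le _⟩
  rintro s e ⟨hse, he, hin⟩ - - y hy hy'
  constructor
  · refine le_of_forall_lt fun k hk => ?_
    rw [hT.lt_joinCount_iff] at hk ⊢
    obtain ⟨t, ht, h1, h2⟩ := hk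
    obtain ⟨a, b, k, -, hba, hle, hmem⟩ := hT.exists_ends ht
    rw [hmem] at h1 h2
    obtain ⟨h1, rfl⟩ := h1
    have hb : e + 1 ≤ b := by
      by_contra hc
      have h3 := hin b (by omega) (by omega)
      have h4 := hle s (by omega) (by omega)
      omega
    exact ⟨t, ht, (hmem _ _).mpr ⟨by omega, rfl⟩, (hmem _ _).mpr ⟨by omega, rfl⟩⟩
  · refine le_of_forall_lt fun k hk => ?_
    rw [hT.lt_joinCount_iff] at hk ⊢
    obtain ⟨t, ht, h1, h2⟩ := hk
    obtain ⟨a, b, k, -, hba, hle, hmem⟩ := hT.exists_ends ht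
    rw [hmem] at h1 h2
    obtain ⟨h1, rfl⟩ := h1
    have ha : a ≤ s := by
      by_contra hc
      have h3 := hin a (by omega) (by omega)
      have h4 := hle (e + 1) (by omega) (by omega)
      omega
    exact ⟨t, ht, (hmem _ _).mpr ⟨by omega, rfl⟩, (hmem _ _).mpr ⟨by omega, rfl⟩⟩

theorem CoverInclusive.subset_of_joined {T₁ T₂ : DyckTiling n} (h₁ : T₁.CoverInclusive)
    (hlow : T₁.lower = T₂.lower)
    (hj : ∀ p k, T₁.Joined p k → T₂.Joined p k) {t₁ t₂ : Finset (ℤ × ℤ)} (ht₁ : t₁ ∈ T₁.tiles)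
    (ht₂ : t₂ ∈ T₂.tiles) {p k : ℕ} (hc₁ : T₁.lower.cell p k ∈ t₁)
    (hc₂ : T₁.lower.cell p k ∈ t₂) : t₁ ⊆ t₂ := by
  intro x hx
  obtain ⟨q, -, l, -, rfl⟩ := exists_cell_of_mem ht₁ hx
  obtain rfl := h₁.level_eq ht₁ hc₁ hx
  have hstep : ∀ r, T₁.lower.cell r k ∈ t₁ → T₁.lower.cell (r + 1) k ∈ t₁ →
      (T₁.lower.cell r k ∈ t₂ ↔ T₁.lower.cell (r + 1) k ∈ t₂) := by
    intro r h1 h2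
    obtain ⟨u, hu, h3, h4⟩ := hj r k ⟨t₁, ht₁, h1, h2⟩
    rw [← hlow] at h3 h4
    constructor
    · intro h
      rwa [tile_unique ht₂ hu h h3]
    · intro h
      rwa [tile_unique ht₂ hu h h4]
  have key : ∀ r d, T₁.lower.cell r k ∈ t₁ → T₁.lower.cell (r + d) k ∈ t₁ →
      (T₁.lower.cell r k ∈ t₂ ↔ T₁.lower.cell (r + d) k ∈ t₂) := by
    intro r d
    induction d with
    | zero => simp
    | succ d ih =>
      intro h1 h2
      have h3 := h₁.cell_mem_of_between ht₁ h1 h2 (r := r + d) (by omega) (by omega)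
      exact (ih h1 h3).trans (hstep _ h3 h2)
  rcases le_total p q with h | h
  · obtain ⟨d, rfl⟩ := Nat.exists_eq_add_of_le h
    exact (key p d hc₁ hx).mp hc₂
  · obtain ⟨d, rfl⟩ := Nat.exists_eq_add_of_le h
    exact (key q d hx hc₁).mpr hc₂

theorem CoverInclusive.tiles_subset {T₁ T₂ : DyckTiling n} (h₁ : T₁.CoverInclusive)
    (h₂ : T₂.CoverInclusive) (hlow : T₁.lower = T₂.lower) (hup : T₁.upper = T₂.upper)
    (hj : ∀ p k, T₁.Joined p k ↔ T₂.Joined p k) : T₁.tiles ⊆ T₂.tiles := by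
  intro t ht
  obtain ⟨a, e, k, hae, -, -, hmem⟩ := h₁.exists_ends ht
  have hc : T₁.lower.cell a k ∈ t := (hmem a k).mpr ⟨⟨le_rfl, hae⟩, rfl⟩
  obtain ⟨hp, hk⟩ := lt_halfGap_of_mem ht hc
  rw [hlow, hup] at hk
  obtain ⟨u, hu, hcu⟩ := exists_tile hp hk
  have h3 := h₁.subset_of_joined hlow (fun p k => (hj p k).mp) ht hu hc (hlow ▸ hcu)
  have h4 := h₂.subset_of_joined hlow.symm (fun p k => (hj p k).mpr) hu ht hcu (hlow ▸ hc)
  rwa [h3.antisymm h4]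

theorem CoverInclusive.eq_of_counts {T₁ T₂ : DyckTiling n} (h₁ : T₁.CoverInclusive)
    (h₂ : T₂.CoverInclusive) (hlow : T₁.lower = T₂.lower)
    (hc : ∀ p ≤ 2 * n, halfGap T₁.lower T₁.upper p = halfGap T₂.lower T₂.upper p)
    (hb : ∀ p < 2 * n, T₁.joinCount p = T₂.joinCount p) : T₁ = T₂ := by
  have hup : T₁.upper = T₂.upper := by
    refine DyckPath.eq_of_pt_eq fun p hp => ?_
    rw [pt_eq_add_halfGap hp (T₁.pt_le_pt p), pt_eq_add_halfGap hp (T₂.pt_le_pt p), hc p hp, hlow]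
  have hj : ∀ p k, T₁.Joined p k ↔ T₂.Joined p k := by
    intro p k
    by_cases hp : p < 2 * n
    · rw [← h₁.lt_joinCount_iff, ← h₂.lt_joinCount_iff, hb p hp]
    · exact ⟨fun h => absurd h.lt_halfGap.1 hp, fun h => absurd h.lt_halfGap.1 hp⟩
  have htiles := (h₁.tiles_subset h₂ hlow hup hj).antisymm
    (h₂.tiles_subset h₁ hlow.symm hup.symm fun p k => (hj p k).symm)
  clear h₁ h₂ hc hb hj
  obtain ⟨_, _, _, _, _, _, _⟩ := T₁
  obtain ⟨_, _, _, _, _, _, _⟩ := T₂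
  dsimp only at hlow hup htiles
  subst hlow hup htiles
  rfl

end DyckTiling

/-- `[a, e]` is a maximal run of points whose steps are joined at level `k`. -/
structure IsMaxRun (b : ℕ → ℕ) (a e k : ℕ) : Prop where
  le : a ≤ e
  joined : ∀ w, a ≤ w → w < e → k < b w
  left : ∀ w, w + 1 = a → b w ≤ k
  right : b e ≤ k

theorem IsMaxRun.subset {b : ℕ → ℕ} {a e k a' e' k' p : ℕ} (h : IsMaxRun b a e k)
    (h' : IsMaxRun b a' e' k') (hk : k' ≤ k) (hp : a ≤ p ∧ p ≤ e) (hp' : a' ≤ p ∧ p ≤ e') :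
    a' ≤ a ∧ e ≤ e' := by
  constructor
  · by_contra hc
    have h1 := h.joined (a' - 1) (by omega) (by omega)
    have h2 := h'.left (a' - 1) (by omega)
    omega
  · by_contra hc
    have h1 := h.joined e' (by omega) (by omega)
    have h2 := h'.right
    omega

theorem exists_isMaxRun {b : ℕ → ℕ} {N : ℕ} (hb : ∀ x, N ≤ x → b x = 0) (p k : ℕ) :
    ∃ a e, a ≤ p ∧ p ≤ e ∧ IsMaxRun b a e k := by
  have hleft : ∀ p, ∃ a ≤ p, (∀ w, a ≤ w → w < p → k < b w) ∧ ∀ w, w + 1 = a → b w ≤ k := by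
    intro p
    induction p with
    | zero => exact ⟨0, le_rfl, by intros; omega, by intros; omega⟩
    | succ p ih =>
      by_cases h : k < b p
      · obtain ⟨a, ha, h1, h2⟩ := ih
        refine ⟨a, by omega, fun w hw hw' => ?_, h2⟩
        rcases eq_or_lt_of_le (Nat.lt_succ_iff.mp hw') with rfl | hlt
        · exact h
        · exact h1 w hw hlt
      · refine ⟨p + 1, le_rfl, by intros; omega, fun w hw => ?_⟩
        obtain rfl : w = p := by omega
        omega
  obtain ⟨a, ha, h1, h2⟩ := hleft p
  have hex : ∃ e, p ≤ e ∧ b e ≤ k :=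
    ⟨max p N, le_max_left _ _, by rw [hb _ (le_max_right _ _)]; omega⟩
  obtain ⟨h3, h4⟩ := Nat.find_spec hex
  refine ⟨a, Nat.find hex, ha, h3, by omega, fun w hw hw' => ?_, h2, h4⟩
  by_cases hwp : w < p
  · exact h1 w hw hwp
  · have := Nat.find_min hex hw'
    push Not at this
    exact this (by omega)

section Construction

variable {n : ℕ} {P : DyckPath n} {c b : ℕ → ℕ}

theorem IsMaxRun.pt_le {a e k : ℕ} (h : IsMaxRun b a e k) (hok : SegOK P.pt c b 0 0 (2 * n))
    (he : e ≤ 2 * n) :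
    P.pt e = P.pt a ∧ ∀ p, a ≤ p → p ≤ e → P.pt a ≤ P.pt p := by
  have h1 : ∀ p, a ≤ p → p ≤ e → P.pt a ≤ P.pt p := by
    intro p
    induction p using Nat.strong_induction_on with
    | _ p ih =>
      intro hp hpe
      rcases eq_or_lt_of_le hp with rfl | hlt
      · exact le_rfl
      obtain ⟨q, rfl⟩ : ∃ q, p = q + 1 := ⟨p - 1, by omega⟩
      have h2 := ih q (by omega) (by omega) (by omega)
      by_contra hc
      obtain ⟨s, hs⟩ := P.exists_isMatch_down (e := q) (by omega) (by omega)
      have hsa : s < a := by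
        by_contra hsa
        have h3 := ih s (by have := hs.1; omega) (by omega) (by have := hs.1; omega)
        have h4 := hs.2.1
        omega
      have h5 := (hok.nest s q hs (Nat.zero_le _) (by omega) (a - 1) (by omega) (by omega)).2
      have h6 := h.joined q (by omega) (by omega)
      have h7 := h.left (a - 1) (by omega)
      omega
  have h2 : ∀ j, a + j ≤ e → P.pt e ≤ P.pt (e - j) := by
    intro j
    induction j using Nat.strong_induction_on with
    | _ j ih =>
      intro hj
      rcases Nat.eq_zero_or_pos j with rfl | hpos
      · simp
      have h2 := ih (j - 1) (by omega) (by omega)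
      rw [show e - (j - 1) = e - j + 1 by omega] at h2
      by_contra hc
      obtain ⟨t, ht, hs⟩ := P.exists_isMatch (s := e - j) (by omega) (by omega)
      have hte : e ≤ t := by
        by_contra hte
        have h3 := ih (e - (t + 1)) (by have := hs.1; omega) (by have := hs.1; omega)
        rw [show e - (e - (t + 1)) = t + 1 by omega, hs.2.1] at h3
        omega
      have h5 := (hok.nest (e - j) t hs (Nat.zero_le _) ht e (by omega) hte).1
      have h6 := h.joined (e - j) (by omega) (by omega)
      have h7 := h.right
      omega
  refine ⟨?_, h1⟩
  have h3 := h1 e h.le le_rfl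
  have h4 := h2 (e - a) (by have := h.le; omega)
  rw [show e - (e - a) = a by have := h.le; omega] at h4
  omega

/-- The cells of level `k` above the points of `[a, e]`. -/
def runCells (P : DyckPath n) (a e k : ℕ) : Finset (ℤ × ℤ) :=
  (Icc a e).image fun p => P.cell p k

theorem mem_runCells {a e k : ℕ} {x : ℤ × ℤ} :
    x ∈ runCells P a e k ↔ ∃ p, (a ≤ p ∧ p ≤ e) ∧ P.cell p k = x := by
  simp only [runCells, mem_image, mem_Icc]

theorem cell_mem_runCells {a e k p l : ℕ} :
    P.cell p l ∈ runCells P a e k ↔ (a ≤ p ∧ p ≤ e) ∧ l = k := by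
  rw [mem_runCells]
  constructor
  · rintro ⟨q, hq, h⟩
    obtain ⟨rfl, rfl⟩ := P.cell_inj.mp h
    exact ⟨hq, rfl⟩
  · rintro ⟨hq, rfl⟩
    exact ⟨p, hq, rfl⟩

theorem isDyckTile_runCells {a e k : ℕ} (hae : a ≤ e) (he : e ≤ 2 * n) (hpt : P.pt e = P.pt a)
    (hle : ∀ p, a ≤ p → p ≤ e → P.pt a ≤ P.pt p) : IsDyckTile (runCells P a e k) := by
  have hpt' : ∀ p : ℕ, P.ht ((p : ℤ) - n) = P.pt p := fun _ => rfl
  refine ⟨(a : ℤ) - n, (e : ℤ) - n, fun x => P.ht x + 2 * k, by omega, ?_, ?_, ?_, ?_⟩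
  · intro x hx hx'
    obtain ⟨p, rfl⟩ : ∃ p : ℕ, x = (p : ℤ) - n := ⟨(x + n).toNat, by omega⟩
    have h1 := P.pt_step p (by omega)
    rw [← hpt', ← hpt', show ((p + 1 : ℕ) : ℤ) - n = (p : ℤ) - n + 1 by push_cast; ring] at h1
    dsimp only
    omega
  · dsimp only
    rw [hpt', hpt', hpt]
  · intro x hx hx'
    obtain ⟨p, rfl⟩ : ∃ p : ℕ, x = (p : ℤ) - n := ⟨(x + n).toNat, by omega⟩
    have := hle p (by omega) (by omega)
    dsimp only
    rw [hpt', hpt']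
    omega
  · ext x
    rw [mem_runCells, mem_image]
    constructor
    · rintro ⟨p, hp, rfl⟩
      exact ⟨(p : ℤ) - n, by rw [mem_Icc]; omega, rfl⟩
    · rintro ⟨y, hy, rfl⟩
      rw [mem_Icc] at hy
      obtain ⟨p, rfl⟩ : ∃ p : ℕ, y = (p : ℤ) - n := ⟨(y + n).toNat, by omega⟩
      exact ⟨p, by omega, rfl⟩

open Classical in
theorem exists_tiling_of_segOK (hok : SegOK P.pt c b 0 0 (2 * n)) (hc0 : c 0 = 0)
    (hcend : c (2 * n) = 0) (hb0 : ∀ x, 2 * n ≤ x → b x = 0) :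
    ∃ T : DyckTiling n, T.CoverInclusive ∧ T.lower = P ∧
      (∀ p ≤ 2 * n, halfGap T.lower T.upper p = c p) ∧ ∀ p < 2 * n, T.joinCount p = b p := by
  obtain ⟨Q, hQ⟩ := DyckPath.exists_pt_eq (n := n) (fun p => P.pt p + 2 * c p)
    (by simp [P.pt_zero, hc0]) (by simp [P.pt_of_ge, hcend])
    (fun k hk => by have := P.pt_nonneg hk; omega) (fun k hk => by
      rcases P.pt_step k hk with h | h
      · have := hok.up k (Nat.zero_le _) hk h
        omega
      · have := hok.down k (Nat.zero_le _) hk h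
        omega)
  have hgap : ∀ p ≤ 2 * n, halfGap P Q p = c p := fun p hp => by
    unfold halfGap
    rw [hQ p hp]
    omega
  have hle : ∀ p ≤ 2 * n, P.pt p ≤ Q.pt p := fun p hp => by rw [hQ p hp]; omega
  have hcn : ∀ p ≤ 2 * n, c p ≤ n := fun p hp => by
    have h1 := Q.pt_le hp
    have h2 := P.pt_nonneg hp
    rw [hQ p hp] at h1
    omega
  have hbc : ∀ p, b p ≤ c p ∧ b p ≤ c (p + 1) := fun p => by
    by_cases hp : p < 2 * n
    · rcases P.pt_step p hp with h | h
      · have := hok.up p (Nat.zero_le _) hp h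
        omega
      · have := hok.down p (Nat.zero_le _) hp h
        omega
    · rw [hb0 p (by omega)]
      omega
  have hbelow : ∀ x : ℤ, P.ht x ≤ Q.ht x := by
    intro x
    rcases le_total x (-n) with h | h
    · rw [P.ht_eq_zero_of_le h, Q.ht_eq_zero_of_le h]
    rcases le_total (n : ℤ) x with h' | h'
    · rw [P.ht_eq_zero_of_ge h', Q.ht_eq_zero_of_ge h']
    obtain ⟨p, rfl⟩ : ∃ p : ℕ, x = (p : ℤ) - n := ⟨(x + n).toNat, by omega⟩
    exact hle p (by omega)
  obtain ⟨tiles, htiles⟩ : ∃ tiles : Finset (Finset (ℤ × ℤ)), ∀ t, t ∈ tiles ↔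
      ∃ a e k, a ≤ 2 * n ∧ k < c a ∧ IsMaxRun b a e k ∧ e ≤ 2 * n ∧ t = runCells P a e k := by
    refine ⟨((range (2 * n + 1) ×ˢ range (2 * n + 1) ×ˢ range (n + 1)).filter fun x =>
      x.2.2 < c x.1 ∧ IsMaxRun b x.1 x.2.1 x.2.2).image
        fun x => runCells P x.1 x.2.1 x.2.2, fun t => ?_⟩
    simp only [mem_image, mem_filter, mem_product, mem_range, Prod.exists]
    constructor
    · rintro ⟨a, e, k, ⟨h1, h2, h3⟩, rfl⟩
      exact ⟨a, e, k, by omega, h2, h3, by omega, rfl⟩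
    · rintro ⟨a, e, k, h1, h2, h3, h4, rfl⟩
      have := hcn a h1
      exact ⟨a, e, k, ⟨by omega, h2, h3⟩, rfl⟩
  have hrunc : ∀ a e k, k < c a → IsMaxRun b a e k → ∀ p, a ≤ p → p ≤ e → k < c p := by
    intro a e k hk hr p hp hpe
    rcases eq_or_lt_of_le hp with rfl | hlt
    · exact hk
    · have h1 := hr.joined (p - 1) (by omega) (by omega)
      have h2 := (hbc (p - 1)).2
      rw [show p - 1 + 1 = p by omega] at h2
      omega
  have hexists : ∀ p ≤ 2 * n, ∀ k < c p, ∃ a e, (a ≤ p ∧ p ≤ e) ∧ IsMaxRun b a e k ∧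
      runCells P a e k ∈ tiles := by
    intro p hp k hk
    obtain ⟨a, e, ha, he, hr⟩ := exists_isMaxRun hb0 p k
    refine ⟨a, e, ⟨ha, he⟩, hr, (htiles _).mpr ⟨a, e, k, by omega, ?_, hr, ?_, rfl⟩⟩
    · rcases eq_or_lt_of_le ha with rfl | hlt
      · exact hk
      · exact (hr.joined a le_rfl (by omega)).trans_le (hbc a).1
    · by_contra hc
      have h1 := hr.joined (e - 1) (by omega) (by omega)
      rw [hb0 (e - 1) (by omega)] at h1
      omega
  let T : DyckTiling n :=
    { lower := P
      upper := Q
      below := hbelow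
      tiles := tiles
      isDyck := by
        intro t ht
        obtain ⟨a, e, k, ha, hk, hr, he, rfl⟩ := (htiles t).mp ht
        obtain ⟨h1, h2⟩ := hr.pt_le hok he
        exact isDyckTile_runCells hr.le he h1 h2
      disj := by
        intro t ht u hu hne
        obtain ⟨a, e, k, ha, hk, hr, he, rfl⟩ := (htiles t).mp ht
        obtain ⟨a', e', k', ha', hk', hr', he', rfl⟩ := (htiles u).mp hu
        rw [Finset.disjoint_left]
        intro x hx hx'
        obtain ⟨p, hp, rfl⟩ := mem_runCells.mp hx
        obtain ⟨hp', rfl⟩ := cell_mem_runCells.mp hx'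
        obtain ⟨h1, h2⟩ := hr.subset hr' le_rfl hp hp'
        obtain ⟨h3, h4⟩ := hr'.subset hr le_rfl hp' hp
        obtain rfl : a = a' := by omega
        obtain rfl : e = e' := by omega
        exact hne rfl
      cover := by
        ext x
        rw [mem_biUnion, mem_skewCells_iff hle]
        constructor
        · rintro ⟨t, ht, hx⟩
          obtain ⟨a, e, k, ha, hk, hr, he, rfl⟩ := (htiles t).mp ht
          obtain ⟨p, hp, rfl⟩ := mem_runCells.mp hx
          exact ⟨p, by omega, k, by
            rw [hgap p (by omega)]
            exact hrunc a e k hk hr p hp.1 hp.2, rfl⟩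
        · rintro ⟨p, hp, k, hk, rfl⟩
          rw [hgap p hp] at hk
          obtain ⟨a, e, hpae, -, ht⟩ := hexists p hp k hk
          exact ⟨_, ht, cell_mem_runCells.mpr ⟨hpae, rfl⟩⟩ }
  have hjoined : ∀ p k, T.Joined p k ↔ k < b p := by
    intro p k
    constructor
    · rintro ⟨t, ht, h1, h2⟩
      obtain ⟨a, e, j, ha, hj, hr, he, rfl⟩ := (htiles t).mp ht
      obtain ⟨h3, rfl⟩ := cell_mem_runCells.mp h1
      obtain ⟨h4, -⟩ := cell_mem_runCells.mp h2
      exact hr.joined p h3.1 (by omega)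
    · intro hk
      have hp : p < 2 * n := by
        by_contra hc
        rw [hb0 p (by omega)] at hk
        omega
      obtain ⟨a, e, hpae, hr, ht⟩ := hexists p hp.le k (hk.trans_le (hbc p).1)
      have hpe : p ≠ e := by
        rintro rfl
        have := hr.right
        omega
      exact ⟨_, ht, cell_mem_runCells.mpr ⟨hpae, rfl⟩, cell_mem_runCells.mpr ⟨by omega, rfl⟩⟩
  refine ⟨T, ?_, rfl, hgap, fun p hp => ?_⟩
  · rintro t ht u hu ⟨x, hx, y, hy, hxy, hlt⟩ z hz
    obtain ⟨a, e, k, ha, hk, hr, he, rfl⟩ := (htiles t).mp ht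
    obtain ⟨a', e', k', ha', hk', hr', he', rfl⟩ := (htiles u).mp hu
    obtain ⟨p, hp, rfl⟩ := mem_runCells.mp hx
    obtain ⟨p', hp', rfl⟩ := mem_runCells.mp hy
    obtain ⟨q, hq, rfl⟩ := mem_runCells.mp hz
    simp only [DyckPath.cell] at hxy hlt
    obtain rfl : p = p' := by omega
    obtain ⟨h1, h2⟩ := hr.subset hr' (by omega) hp hp'
    exact ⟨_, cell_mem_runCells.mpr ⟨by omega, rfl⟩⟩
  · refine eq_of_forall_lt_iff fun k => ?_
    rw [DyckTiling.lt_joinCount_iff_of_downward, hjoined]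
    intro j k h hj
    rw [hjoined] at h ⊢
    omega

end Construction

theorem segList_inj {c b c' b' : ℕ → ℕ} {p len : ℕ} (h : segList c b p len = segList c' b' p len)
    {x : ℕ} (hx : x < len) : b (p + x) = b' (p + x) ∧ c (p + x + 1) = c' (p + x + 1) := by
  have := congrArg (fun L => L[x]?) h
  simpa [segList, List.getElem?_range' hx] using this

namespace DyckTiling

variable {n : ℕ}

/-- The configuration recording the heights and joined level counts of a tiling. -/
def profile (T : DyckTiling n) : List (ℕ × ℕ) :=
  segList (halfGap T.lower T.upper) T.joinCount 0 (2 * n)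

theorem dis_eq_descentWt_profile (T : DyckTiling n) :
    T.dis = PlaneForest.descentWt 0 T.profile := by
  have h := descentWt_segList (halfGap T.lower T.upper) T.joinCount 0 (2 * n)
  rw [halfGap_zero] at h
  rw [profile, h, dis_eq_sum]
  simp

theorem CoverInclusive.eq_of_profile {T₁ T₂ : DyckTiling n} (h₁ : T₁.CoverInclusive)
    (h₂ : T₂.CoverInclusive) (hlow : T₁.lower = T₂.lower) (h : T₁.profile = T₂.profile) :
    T₁ = T₂ := by
  refine h₁.eq_of_counts h₂ hlow (fun p hp => ?_) fun p hp => ?_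
  · cases p with
    | zero => simp only [halfGap_zero]
    | succ p => simpa using (segList_inj h (x := p) (by omega)).2
  · simpa using (segList_inj h hp).1

theorem exists_profile_eq_iff {P : DyckPath n} {t : PlaneForest} (ht : t.size = n)
    (hs : t.Shape 0 P.pt) (L : List (ℕ × ℕ)) :
    (∃ T : DyckTiling n, (T.CoverInclusive ∧ T.lower = P) ∧ T.profile = L) ↔
      L ∈ PlaneForest.configs t 0 0 ∧ PlaneForest.endHt 0 L = 0 := by
  subst ht
  constructor
  · rintro ⟨T, ⟨hT, rfl⟩, rfl⟩
    have hmem := PlaneForest.segList_mem_configs_iff (c := halfGap T.lower T.upper)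
      (b := T.joinCount) (f := 0) hs
    have hend := endHt_segList (halfGap T.lower T.upper) T.joinCount 0 (2 * t.size)
    rw [halfGap_zero] at hmem hend
    rw [zero_add, halfGap_last] at hend
    exact ⟨hmem.mpr (by simpa using hT.segOK), hend⟩
  · rintro ⟨hL, hend⟩
    have hlen := PlaneForest.length_of_mem_configs hL
    obtain ⟨c, b, hc0, hcb, hb⟩ := exists_segList_eq L
    rw [hlen] at hcb hb
    subst hcb
    have hmem := PlaneForest.segList_mem_configs_iff (c := c) (b := b) (f := 0) hs
    have hend' := endHt_segList c b 0 (2 * t.size)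
    rw [hc0] at hmem hend'
    rw [hend, zero_add] at hend'
    obtain ⟨T, hT, hlow, hc, hj⟩ := exists_tiling_of_segOK
      (by simpa using hmem.mp hL) hc0 hend'.symm hb
    refine ⟨T, ⟨hT, hlow⟩, ?_⟩
    refine List.map_congr_left fun x hx => ?_
    have hx' : x < 2 * t.size := by simpa using hx
    rw [hj x hx', hc (x + 1) hx']

end DyckTiling

theorem finsum_X_pow_dis {n : ℕ} {P : DyckPath n} {t : PlaneForest} (ht : t.size = n)
    (hs : t.Shape 0 P.pt) {R : Type*} [CommRing R] (z : R) :
    ∑ᶠ T : {T : DyckTiling n // T.CoverInclusive ∧ T.lower = P}, z ^ T.1.dis =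
      PlaneForest.transfer z t (fun i => if i = 0 then 1 else 0) 0 := by
  have hinj : Function.Injective fun T : {T : DyckTiling n // T.CoverInclusive ∧ T.lower = P} =>
      T.1.profile := fun T₁ T₂ h =>
    Subtype.ext (T₁.2.1.eq_of_profile T₂.2.1 (T₁.2.2.trans T₂.2.2.symm) h)
  have hrange : Set.range (fun T : {T : DyckTiling n // T.CoverInclusive ∧ T.lower = P} =>
      T.1.profile) =
        ↑((PlaneForest.configs t 0 0).toFinset.filter fun L => PlaneForest.endHt 0 L = 0) := by
    ext L
    simpa using DyckTiling.exists_profile_eq_iff ht hs L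
  have hsum := PlaneForest.sum_configs z t (fun i => if i = 0 then 1 else 0) 0 0
  simp only [add_zero] at hsum
  rw [← hsum, ← List.sum_toFinset _ (PlaneForest.nodup_configs t 0 0)]
  simp only [mul_ite, mul_one, mul_zero, DyckTiling.dis_eq_descentWt_profile]
  rw [← Finset.sum_filter, ← finsum_mem_coe_finset, ← hrange, finsum_mem_range hinj]

theorem PowerSeries.eq_mul_mk_of_forall {R : Type*} [CommRing R] {F G : PowerSeries R} {f : ℕ → R}
    (h : ∀ M, ∃ y : PowerSeries R,
      F = G * ∑ m ∈ range M, PowerSeries.X ^ m * PowerSeries.C (f m) + PowerSeries.X ^ M * y) :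
    F = G * PowerSeries.mk f := by
  ext d
  obtain ⟨y, hy⟩ := h (d + 1)
  rw [hy, map_add, PowerSeries.coeff_X_pow_mul', if_neg (by omega), add_zero,
    PowerSeries.coeff_mul, PowerSeries.coeff_mul]
  refine Finset.sum_congr rfl fun ij hij => ?_
  have hij' : ij.2 < d + 1 := by
    have := Finset.HasAntidiagonal.mem_antidiagonal.mp hij
    omega
  simp [PowerSeries.coeff_mul_C, PowerSeries.coeff_X_pow, hij']

/-- For every Dyck path `λ` of order `n`,
`Σ_{T ∈ D(λ,*)} z^{dis(T)} = Σ_{σ ∈ 𝓛(P_λ)} z^{des(σ)}` in `ℤ[z]`. -/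
theorem dyck_tilings_dis_eq_descents (n : ℕ) (lam : DyckPath n) :
    ∑ᶠ T : {T : DyckTiling n // T.CoverInclusive ∧ T.lower = lam},
        (Polynomial.X : Polynomial ℤ) ^ T.1.dis =
      ∑ᶠ σ : {σ : Equiv.Perm (Fin n) // LinExt lam σ},
        (Polynomial.X : Polynomial ℤ) ^ permDes σ.1 := by
  classical
  obtain ⟨t, ht, hs⟩ := PlaneForest.exists_shape n 0 lam.pt
    (fun x _ hx => lam.pt_step x (by omega))
    (by rw [lam.pt_zero, lam.pt_of_ge (by omega)])
    (fun x _ hx => by rw [lam.pt_zero]; exact lam.pt_nonneg (by omega))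
  have hperm := sum_X_pow_permDes_linExt lam t ht hs (univ.filter (LinExt lam)) (by simp)
  have htil : ((∑ᶠ T : {T : DyckTiling n // T.CoverInclusive ∧ T.lower = lam},
      (Polynomial.X : Polynomial ℤ) ^ T.1.dis : Polynomial ℤ) : PowerSeries ℤ) =
        (1 - PowerSeries.X) ^ (n + 1) * PowerSeries.mk fun m => (t.orderPoly m : ℤ) := by
    rw [finsum_X_pow_dis ht hs]
    refine PowerSeries.eq_mul_mk_of_forall fun M => ?_
    obtain ⟨y, hy⟩ := PlaneForest.transfer_delta (Polynomial.X : Polynomial ℤ) t M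
    refine ⟨y, ?_⟩
    have := congrArg (Polynomial.coeToPowerSeries.ringHom (R := ℤ)) hy
    simp only [map_add, map_mul, map_sum, map_pow, map_sub, map_one, map_natCast,
      Polynomial.coeToPowerSeries.ringHom_apply, Polynomial.coe_X, ht] at this
    simpa only [map_natCast] using this
  apply Polynomial.coe_injective
  rw [htil, ← hperm, finsum_eq_sum_of_fintype, ← Finset.sum_subtype (univ.filter (LinExt lam))
    (by simp) fun σ => (Polynomial.X : Polynomial ℤ) ^ permDes σ]
  rw [← Polynomial.coeToPowerSeries.ringHom_apply, map_sum]
  simp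

end
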